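/- Let σ₁,…,σ_k be non-crossing RGFs, let q < k be an index, and let σ′_q be a non-crossing RGF that is cc-equivalent to σ_q. Then the pattern σ = 1[σ₁]1[σ₂]1⋯1[σ_{q−1}]1[σ_q]1[σ_{q+1}]1⋯1[σ_k]1 is cc-equivalent to the pattern σ′ = 1[σ₁]1[σ₂]1⋯1[σ_{q−1}]1[σ′_q]1[σ_{q+1}]1⋯1[σ_k]1 obtained by replacing σ_q with σ′_q. -/

import Mathlib

/-- A restricted growth function (canonical sequential form of a set partition):
a word over the positive integers whose first letter is 1 and where each letter
is at most one more than the maximum of the preceding letters. -/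
def IsRGF (w : List ℕ) : Prop :=
  (∀ x ∈ w, 1 ≤ x) ∧
  (w ≠ [] → w.getD 0 0 = 1) ∧
  ∀ i, i + 1 < w.length → w.getD (i + 1) 0 ≤ ((w.take (i + 1)).foldr max 0) + 1

/-- Two words of the same length are order-isomorphic: corresponding entries
compare the same way (this preserves equalities as well). -/
def WordOrdIso (s t : List ℕ) : Prop :=
  s.length = t.length ∧
  ∀ i j, i < s.length → j < s.length →
    (s.getD i 0 < s.getD j 0 ↔ t.getD i 0 < t.getD j 0)

/-- `w` contains the pattern `p`: a subsequence of `w` is order-isomorphic to `p`. -/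
def PatContains (w p : List ℕ) : Prop := ∃ s : List ℕ, s.Sublist w ∧ WordOrdIso s p

/-- `w` avoids the pattern `p`. -/
def PatAvoids (w p : List ℕ) : Prop := ¬ PatContains w p

/-- `pCount n T` = number of RGFs of length `n` avoiding every pattern in `T`. -/
noncomputable def pCount (n : ℕ) (T : Set (List ℕ)) : ℕ :=
  {w : List ℕ | IsRGF w ∧ w.length = n ∧ ∀ p ∈ T, PatAvoids w p}.ncard

/-- A word is non-crossing if it avoids the pattern 1212. -/
def NonCrossing (w : List ℕ) : Prop := PatAvoids w [1,2,1,2]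

/-- The number of distinct letters of an RGF equals its maximum letter. -/
def nLetters (w : List ℕ) : ℕ := w.foldr max 0

/-- `rgfComp a b` is the pattern `a[b]`: `a` followed by `b` shifted up by the
number of distinct letters of `a`. -/
def rgfComp (a b : List ℕ) : List ℕ := a ++ b.map (· + nLetters a)

/-- A connected RGF: nonempty and not expressible as `σ[τ]` with `σ, τ` nonempty RGFs. -/
def Connected (w : List ℕ) : Prop :=
  w ≠ [] ∧ ¬ ∃ a b : List ℕ, IsRGF a ∧ IsRGF b ∧ a ≠ [] ∧ b ≠ [] ∧ w = rgfComp a b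

/-- `w` decomposes as `σ₁[σ₂]⋯[σ_p]` with each `σ_i` a connected RGF. -/
def HasComponents (w : List ℕ) (p : ℕ) : Prop :=
  ∃ l : List (List ℕ), l.length = p ∧ (∀ c ∈ l, IsRGF c ∧ Connected c) ∧
    w = l.foldr rgfComp []

/-- Number of non-crossing RGFs of length `n` with `p` components avoiding `σ`. -/
noncomputable def ncCount (n p : ℕ) (σ : List ℕ) : ℕ :=
  {w : List ℕ | IsRGF w ∧ NonCrossing w ∧ w.length = n ∧ PatAvoids w σ ∧
    HasComponents w p}.ncard

/-- cc-equivalence of patterns. -/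
def ccEquiv (σ τ : List ℕ) : Prop := ∀ n p : ℕ, ncCount n p σ = ncCount n p τ

/-- Number of non-crossing RGFs of length `n` avoiding `σ`. -/
noncomputable def ncAvoidCount (n : ℕ) (σ : List ℕ) : ℕ :=
  {w : List ℕ | IsRGF w ∧ NonCrossing w ∧ w.length = n ∧ PatAvoids w σ}.ncard

/-- Auxiliary: builds `1[σ₁]1[σ₂]⋯1[σ_k]1` with accumulated letter shift `s`. -/
def onePatAux : ℕ → List (List ℕ) → List ℕ
  | _, [] => [1]
  | s, c :: rest => 1 :: (c.map (· + s) ++ onePatAux (s + nLetters c) rest)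

/-- The pattern `1[σ₁]1[σ₂]⋯1[σ_k]1`. -/
def onePat (l : List (List ℕ)) : List ℕ := onePatAux 1 l

/-- The pattern `1[σ]1[τ]`. -/
def pat2 (σ τ : List ℕ) : List ℕ :=
  1 :: (σ.map (· + 1) ++ 1 :: τ.map (· + (1 + nLetters σ)))

/-!
A non-crossing restricted growth function is the sequence of its connected components, and a
connected one is uniquely `1[w₁]1⋯1[w_m]1` with non-crossing, possibly empty `wᵢ`. Such a word
contains `1[c₁]1⋯1[c_k]1` if and only if some `wᵢ` does, or the sequence `w₁, …, w_m` begins with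
`k` consecutive segments whose joins contain `c₁, …, c_k` respectively. (A segment for an empty
`cᵢ` has to be nonempty.)

Let `A` and `D` be the length generating series of all, respectively connected, non-crossing words
avoiding the pattern. The pattern is connected, so a word avoids it if and only if all its
components do; hence `A = 1 + D A`, and the words with `p` components are counted by `D ^ p`.
Cutting `w₁, …, w_m` into segments greedily gives `D = X F(X A, g₁, …, g_k)` with a fixed polynomial
`F`, where `gᵢ` is the series of the sequences of words whose join avoids `cᵢ`. Such a sequence is
determined by its join and the numbers of components of its terms, so `gᵢ` depends only on the
cc-class of `cᵢ`. The two equations determine `D`.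
-/

/-! ### Restricted growth words -/

/-- A word over the positive integers. -/
abbrev IsPositive (w : List ℕ) : Prop := ∀ x ∈ w, 0 < x

@[simp] lemma nLetters_nil : nLetters [] = 0 := rfl

@[simp] lemma nLetters_cons (x : ℕ) (w : List ℕ) : nLetters (x :: w) = max x (nLetters w) := rfl

@[simp] lemma nLetters_append (u v : List ℕ) :
    nLetters (u ++ v) = max (nLetters u) (nLetters v) := by
  induction u with
  | nil => simp
  | cons x u ih => simp [ih, max_assoc]

lemma le_nLetters_of_mem {w : List ℕ} {x : ℕ} (hx : x ∈ w) : x ≤ nLetters w := by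
  induction w with
  | nil => simp at hx
  | cons y w ih =>
    rcases List.mem_cons.1 hx with rfl | hx
    · simp
    · simp [ih hx]

lemma max_nLetters_map_add (w : List ℕ) (s : ℕ) :
    max s (nLetters (w.map (· + s))) = s + nLetters w := by
  induction w with
  | nil => simp
  | cons x w ih =>
    simp only [List.map_cons, nLetters_cons]
    omega

@[simp] lemma nLetters_rgfComp (a b : List ℕ) :
    nLetters (rgfComp a b) = nLetters a + nLetters b := by
  rw [rgfComp, nLetters_append, max_nLetters_map_add]

@[simp] lemma length_rgfComp (a b : List ℕ) :
    (rgfComp a b).length = a.length + b.length := by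
  simp [rgfComp]

@[simp] lemma rgfComp_nil (a : List ℕ) : rgfComp a [] = a := by simp [rgfComp]

@[simp] lemma nil_rgfComp (a : List ℕ) : rgfComp [] a = a := by simp [rgfComp]

lemma map_add_rgfComp (a b : List ℕ) (s : ℕ) :
    (rgfComp a b).map (· + s) = a.map (· + s) ++ b.map (· + (s + nLetters a)) := by
  simp [rgfComp, Function.comp_def, add_assoc, add_comm (nLetters a)]

lemma rgfComp_assoc (a b c : List ℕ) : rgfComp (rgfComp a b) c = rgfComp a (rgfComp b c) := by
  rw [rgfComp, nLetters_rgfComp, rgfComp, rgfComp, map_add_rgfComp, List.append_assoc]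

lemma IsPositive.rgfComp {a b : List ℕ} (ha : IsPositive a) (hb : IsPositive b) :
    IsPositive (rgfComp a b) := by
  simp only [IsPositive, _root_.rgfComp, List.mem_append, List.mem_map]
  rintro x (hx | ⟨y, hy, rfl⟩)
  · exact ha x hx
  · exact Nat.add_pos_left (hb y hy) _

/-- The word `c₁[c₂]⋯[c_p]`. -/
def rgfJoin (l : List (List ℕ)) : List ℕ := l.foldr rgfComp []

@[simp] lemma rgfJoin_nil : rgfJoin [] = [] := rfl

@[simp] lemma rgfJoin_cons (c : List ℕ) (l : List (List ℕ)) :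
    rgfJoin (c :: l) = rgfComp c (rgfJoin l) := rfl

lemma rgfJoin_append (l m : List (List ℕ)) :
    rgfJoin (l ++ m) = rgfComp (rgfJoin l) (rgfJoin m) := by
  induction l with
  | nil => simp
  | cons c l ih => simp [ih, rgfComp_assoc]

lemma rgfJoin_flatten (L : List (List (List ℕ))) :
    rgfJoin L.flatten = rgfJoin (L.map rgfJoin) := by
  induction L with
  | nil => simp
  | cons l L ih => simp [rgfJoin_append, ih]

lemma isPositive_rgfJoin {l : List (List ℕ)} (h : ∀ c ∈ l, IsPositive c) :
    IsPositive (rgfJoin l) := by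
  induction l with
  | nil => exact List.forall_mem_nil _
  | cons c l ih =>
    rw [List.forall_mem_cons] at h
    exact h.1.rgfComp (ih h.2)

/-- `IsRGFFrom m w`: appending `w` to a restricted growth function with largest letter `m` gives a
restricted growth function. This is the left-to-right recursive form of `IsRGF`. -/
def IsRGFFrom : ℕ → List ℕ → Prop
  | _, [] => True
  | m, x :: w => 0 < x ∧ x ≤ m + 1 ∧ IsRGFFrom (max m x) w

lemma isRGFFrom_iff_getD {w : List ℕ} {m : ℕ} : IsRGFFrom m w ↔ IsPositive w ∧
    ∀ i < w.length, w.getD i 0 ≤ max m (nLetters (w.take i)) + 1 := by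
  induction w generalizing m with
  | nil => simp [IsRGFFrom, IsPositive]
  | cons y w ih =>
    simp only [IsRGFFrom, ih, List.forall_mem_cons, List.length_cons, Nat.forall_lt_succ_left,
      List.getD_cons_zero, List.getD_cons_succ, List.take_zero, List.take_succ_cons, nLetters_nil,
      nLetters_cons, max_assoc, Nat.max_zero]
    tauto

lemma isRGF_iff_isRGFFrom_zero {w : List ℕ} : IsRGF w ↔ IsRGFFrom 0 w := by
  rw [isRGFFrom_iff_getD, IsRGF]
  refine and_congr_right fun hpos => ?_
  cases w with
  | nil => simp
  | cons x w =>
    have hx : 0 < x := hpos x List.mem_cons_self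
    have hhead : x = 1 ↔ x ≤ 1 := by omega
    simp only [ne_eq, reduceCtorEq, not_false_eq_true, forall_const, List.getD_cons_zero, hhead,
      List.length_cons, Nat.add_lt_add_iff_right, Nat.forall_lt_succ_left, List.take_zero,
      nLetters_nil, Nat.zero_max, zero_add]
    rfl

lemma isRGFFrom_append {u v : List ℕ} {m : ℕ} :
    IsRGFFrom m (u ++ v) ↔ IsRGFFrom m u ∧ IsRGFFrom (max m (nLetters u)) v := by
  induction u generalizing m with
  | nil => simp [IsRGFFrom]
  | cons x u ih => simp [IsRGFFrom, ih, max_assoc, and_assoc]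

lemma isRGFFrom_map_add_iff {w : List ℕ} (hw : IsPositive w) {m s : ℕ} :
    IsRGFFrom (m + s) (w.map (· + s)) ↔ IsRGFFrom m w := by
  induction w generalizing m with
  | nil => simp [IsRGFFrom]
  | cons x w ih =>
    rw [IsPositive, List.forall_mem_cons] at hw
    simp only [List.map_cons, IsRGFFrom, Nat.add_max_add_right, ih hw.2]
    refine and_congr ?_ (and_congr_left' ?_) <;> omega

namespace IsRGFFrom

variable {m : ℕ} {w : List ℕ}

lemma mono {m' : ℕ} (hm : m ≤ m') (h : IsRGFFrom m w) : IsRGFFrom m' w := by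
  induction w generalizing m m' with
  | nil => trivial
  | cons x w ih => exact ⟨h.1, h.2.1.trans (by omega), ih (max_le_max_right x hm) h.2.2⟩

lemma mem_of_le_nLetters (h : IsRGFFrom m w) {x : ℕ} (hmx : m < x) (hx : x ≤ nLetters w) :
    x ∈ w := by
  induction w generalizing m with
  | nil => exact absurd (hmx.trans_le hx) (Nat.not_lt_zero m)
  | cons y w ih =>
    obtain ⟨-, hy, hw⟩ := h
    rw [List.mem_cons, or_iff_not_imp_left]
    intro hxy
    rw [nLetters_cons] at hx
    exact ih hw (by omega) (by omega)

lemma nLetters_le (h : IsRGFFrom m w) : nLetters w ≤ m + w.length := by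
  induction w generalizing m with
  | nil => simp
  | cons y w ih =>
    have := ih h.2.2
    have := h.2.1
    simp only [nLetters_cons, List.length_cons]
    omega

lemma exists_isRGF_map_add (h : IsRGFFrom m w) (hw : ∀ x ∈ w, m < x) :
    ∃ c, IsRGF c ∧ w = c.map (· + m) := by
  obtain ⟨c, rfl⟩ : w ∈ Set.range (List.map (· + m)) := by
    rw [Set.range_list_map]
    exact fun x hx => ⟨x - m, Nat.sub_add_cancel (hw x hx).le⟩
  have hc : IsPositive c := fun x hx => by simpa using hw _ (List.mem_map_of_mem hx)
  refine ⟨c, isRGF_iff_isRGFFrom_zero.2 ?_, rfl⟩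
  rwa [← isRGFFrom_map_add_iff hc, Nat.zero_add]

end IsRGFFrom

lemma isRGF_nil : IsRGF [] := isRGF_iff_isRGFFrom_zero.2 trivial

lemma IsRGF.rgfComp {a b : List ℕ} (ha : IsRGF a) (hb : IsRGF b) : IsRGF (rgfComp a b) := by
  have hpos := hb.1
  rw [isRGF_iff_isRGFFrom_zero] at *
  refine isRGFFrom_append.2 ⟨ha, ?_⟩
  simpa using (isRGFFrom_map_add_iff hpos (m := 0)).2 hb

lemma finite_setOf_isRGF_length_eq (n : ℕ) : {w : List ℕ | IsRGF w ∧ w.length = n}.Finite := by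
  refine ((List.finite_length_eq (Fin (n + 1)) n).image (List.map Fin.val)).subset ?_
  rintro w ⟨hw, rfl⟩
  have hlt : ∀ x ∈ w, x < w.length + 1 := fun x hx => by
    have := (isRGF_iff_isRGFFrom_zero.1 hw).nLetters_le
    have := le_nLetters_of_mem hx
    omega
  exact ⟨w.pmap Fin.mk hlt, by simp, by simp [List.map_pmap]⟩

/-! ### Occurrences of patterns -/

/-- An occurrence of a pattern in a word, recorded as the list of pairs (letter of the word, letter
of the pattern) it matches: the two coordinates must compare alike. -/
def OrderMatching (z : List (ℕ × ℕ)) : Prop :=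
  ∀ a ∈ z, ∀ b ∈ z, (a.1 < b.1 ↔ a.2 < b.2)

lemma OrderMatching.eq_iff {z : List (ℕ × ℕ)} (hz : OrderMatching z) {a b : ℕ × ℕ} (ha : a ∈ z)
    (hb : b ∈ z) : a.1 = b.1 ↔ a.2 = b.2 := by
  have := hz a ha b hb
  have := hz b hb a ha
  omega

lemma OrderMatching.mono {z z' : List (ℕ × ℕ)} (hz : OrderMatching z) (h : z' ⊆ z) :
    OrderMatching z' :=
  fun a ha b hb => hz a (h ha) b (h hb)

lemma patContains_iff_exists_orderMatching {w p : List ℕ} : PatContains w p ↔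
    ∃ z, OrderMatching z ∧ (z.map Prod.fst).Sublist w ∧ z.map Prod.snd = p := by
  constructor
  · rintro ⟨s, hsw, hlen, hiso⟩
    refine ⟨s.zip p, ?_, by rwa [List.map_fst_zip hlen.le], List.map_snd_zip hlen.ge⟩
    intro a ha b hb
    obtain ⟨i, hi, rfl⟩ := List.mem_iff_getElem.1 ha
    obtain ⟨j, hj, rfl⟩ := List.mem_iff_getElem.1 hb
    rw [List.length_zip, lt_min_iff] at hi hj
    simpa [List.getD_eq_getElem, hi, hj] using hiso i j hi.1 hj.1
  · rintro ⟨z, hz, hsub, rfl⟩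
    refine ⟨_, hsub, by simp, fun i j hi hj => ?_⟩
    rw [List.length_map] at hi hj
    simpa [List.getD_eq_getElem, hi, hj] using hz _ (List.getElem_mem hi) _ (List.getElem_mem hj)

lemma PatContains.mono {u w p : List ℕ} (h : PatContains u p) (huw : u.Sublist w) :
    PatContains w p :=
  let ⟨s, hs, hiso⟩ := h
  ⟨s, hs.trans huw, hiso⟩

lemma PatAvoids.mono {u w p : List ℕ} (h : PatAvoids w p) (huw : u.Sublist w) : PatAvoids u p :=
  fun hu => h (hu.mono huw)

lemma PatContains.of_sublist {w p q : List ℕ} (h : PatContains w p) (hqp : q.Sublist p) :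
    PatContains w q := by
  obtain ⟨z, hz, hzw, rfl⟩ := patContains_iff_exists_orderMatching.1 h
  obtain ⟨z', hz', rfl⟩ := List.sublist_map_iff.1 hqp
  exact patContains_iff_exists_orderMatching.2
    ⟨z', hz.mono hz'.subset, (hz'.map Prod.fst).trans hzw, rfl⟩

lemma wordOrdIso_map_iff {f : ℕ → ℕ} (hf : StrictMono f) {s p : List ℕ} :
    WordOrdIso (s.map f) p ↔ WordOrdIso s p := by
  simp +contextual [WordOrdIso, hf.lt_iff_lt]

lemma patContains_map_iff {f : ℕ → ℕ} (hf : StrictMono f) {w p : List ℕ} :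
    PatContains (w.map f) p ↔ PatContains w p := by
  simp only [PatContains, List.sublist_map_iff]
  constructor
  · rintro ⟨_, ⟨s, hs, rfl⟩, hiso⟩
    exact ⟨s, hs, (wordOrdIso_map_iff hf).1 hiso⟩
  · rintro ⟨s, hs, hiso⟩
    exact ⟨_, ⟨s, hs, rfl⟩, (wordOrdIso_map_iff hf).2 hiso⟩

lemma patContains_map_right_iff {f : ℕ → ℕ} (hf : StrictMono f) {w p : List ℕ} :
    PatContains w (p.map f) ↔ PatContains w p := by
  refine exists_congr fun s => and_congr_right fun _ => ?_
  simp only [WordOrdIso, List.length_map]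
  refine and_congr_right fun hlen => forall₂_congr fun i j => forall₂_congr fun hi hj => ?_
  simp [← hlen, hi, hj, hf.lt_iff_lt]

lemma sublist_or_sublist_of_sublist_append {α : Type*} {l u v : List α} {x : α}
    (hl : l.Sublist (u ++ v)) (hhead : l.head? = some x) (hlast : l.getLast? = some x)
    (hx : x ∉ u ∨ x ∉ v) : l.Sublist u ∨ l.Sublist v := by
  obtain ⟨p, q, rfl, hp, hq⟩ := List.sublist_append_iff.1 hl
  cases p with
  | nil => exact Or.inr hq
  | cons a p =>
    rcases List.eq_nil_or_concat q with rfl | ⟨q, b, rfl⟩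
    · exact Or.inl (by simpa using hp)
    · obtain rfl : a = x := by simpa using hhead
      obtain rfl : b = a := by simpa [List.getLast?_append, List.getLast?_cons] using hlast
      have := hp.subset List.mem_cons_self
      have : b ∈ v := hq.subset (by simp)
      tauto

lemma nonCrossing_iff {w : List ℕ} :
    NonCrossing w ↔ ∀ x y, x < y → ¬ [x, y, x, y].Sublist w := by
  have hpat : PatContains w [1, 2, 1, 2] ↔ ∃ x y, x < y ∧ [x, y, x, y].Sublist w := by
    rw [patContains_iff_exists_orderMatching]
    constructor
    · rintro ⟨z, hz, hsub, hsnd⟩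
      obtain ⟨a, b, c, d, rfl⟩ : ∃ a b c d, z = [(a, 1), (b, 2), (c, 1), (d, 2)] := by
        simpa [List.map_eq_cons_iff, and_assoc] using hsnd
      have hab := hz (a, 1) (by simp) (b, 2) (by simp)
      have hac := hz.eq_iff (a := (a, 1)) (b := (c, 1)) (by simp) (by simp)
      have hbd := hz.eq_iff (a := (b, 2)) (b := (d, 2)) (by simp) (by simp)
      simp only [iff_true, Nat.one_lt_ofNat] at hab hac hbd
      subst hac hbd
      exact ⟨a, b, hab, hsub⟩
    · rintro ⟨x, y, hxy, hsub⟩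
      refine ⟨[(x, 1), (y, 2), (x, 1), (y, 2)], ?_, hsub, rfl⟩
      simp [OrderMatching, hxy, hxy.le]
  simp only [NonCrossing, PatAvoids, hpat]
  push Not
  rfl

lemma nonCrossing_nil : NonCrossing [] := by simp [nonCrossing_iff]

lemma NonCrossing.append {u v : List ℕ} (hu : NonCrossing u) (hv : NonCrossing v)
    (huv : u.Disjoint v) : NonCrossing (u ++ v) := by
  rw [nonCrossing_iff] at *
  intro x y hxy hsub
  obtain ⟨p, q, hpq, hp, hq⟩ := List.sublist_append_iff.1 hsub
  have hdisj : ∀ a ∈ p, a ∉ q := fun a hap haq => huv (hp.subset hap) (hq.subset haq)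
  match p, hpq with
  | [], hpq => exact hv x y hxy (hpq ▸ hq)
  | [a], hpq =>
    obtain ⟨rfl, rfl⟩ : x = a ∧ [y, x, y] = q := by simpa using hpq
    exact hdisj x (by simp) (by simp)
  | [a, b], hpq =>
    obtain ⟨rfl, rfl, rfl⟩ : x = a ∧ y = b ∧ [x, y] = q := by simpa using hpq
    exact hdisj y (by simp) (by simp)
  | [a, b, c], hpq =>
    obtain ⟨rfl, rfl, rfl, rfl⟩ : x = a ∧ y = b ∧ x = c ∧ [y] = q := by simpa using hpq
    exact hdisj y (by simp) (by simp)
  | a :: b :: c :: d :: p, hpq =>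
    obtain ⟨rfl, rfl, rfl, rfl, rfl, -⟩ : x = a ∧ y = b ∧ x = c ∧ y = d ∧ p = [] ∧ q = [] := by
      simpa using hpq
    exact hu x y hxy hp

lemma nonCrossing_map_add_iff {w : List ℕ} {s : ℕ} :
    NonCrossing (w.map (· + s)) ↔ NonCrossing w :=
  not_congr (patContains_map_iff add_left_strictMono)

lemma NonCrossing.rgfComp {a b : List ℕ} (ha : NonCrossing a) (hb : NonCrossing b)
    (hpos : IsPositive b) : NonCrossing (rgfComp a b) := by
  refine ha.append (nonCrossing_map_add_iff.2 hb) fun x hxa hxb => ?_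
  obtain ⟨y, hy, rfl⟩ := List.mem_map.1 hxb
  have := le_nLetters_of_mem hxa
  have := hpos y hy
  omega

/-! ### The words `1[c₁]1⋯1[c_k]1` -/

section OnePat

variable {l l' : List (List ℕ)} {s : ℕ}

@[simp] lemma onePatAux_nil (s : ℕ) : onePatAux s [] = [1] := rfl

@[simp] lemma onePatAux_cons (s : ℕ) (c : List ℕ) (l : List (List ℕ)) :
    onePatAux s (c :: l) = 1 :: (c.map (· + s) ++ onePatAux (s + nLetters c) l) := rfl

lemma head?_onePatAux (s : ℕ) (l : List (List ℕ)) : (onePatAux s l).head? = some 1 := by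
  cases l <;> rfl

lemma getLast?_onePatAux (s : ℕ) (l : List (List ℕ)) : (onePatAux s l).getLast? = some 1 := by
  induction l generalizing s with
  | nil => rfl
  | cons c l ih => simp [List.getLast?_append, List.getLast?_cons, ih]

lemma exists_onePatAux_eq_cons (s : ℕ) (l : List (List ℕ)) : ∃ t, onePatAux s l = 1 :: t :=
  List.head?_eq_some_iff.1 (head?_onePatAux s l)

lemma eq_one_or_lt_of_mem_onePatAux (hl : ∀ c ∈ l, IsPositive c) {x : ℕ}
    (hx : x ∈ onePatAux s l) : x = 1 ∨ s < x := by
  induction l generalizing s with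
  | nil => simpa using Or.inl hx
  | cons c l ih =>
    rw [List.forall_mem_cons] at hl
    simp only [onePatAux_cons, List.mem_cons, List.mem_append, List.mem_map] at hx
    rcases hx with rfl | ⟨y, hy, rfl⟩ | hx
    · exact Or.inl rfl
    · have := hl.1 y hy
      omega
    · have := ih hl.2 hx
      omega

lemma isPositive_onePatAux (hl : ∀ c ∈ l, IsPositive c) : IsPositive (onePatAux s l) :=
  fun x hx => by
    have := eq_one_or_lt_of_mem_onePatAux hl hx
    omega

lemma one_notMem_map_add {w : List ℕ} (hw : IsPositive w) (hs : 0 < s) : 1 ∉ w.map (· + s) := by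
  rintro h
  obtain ⟨x, hx, hxs⟩ := List.mem_map.1 h
  have := hw x hx
  omega

lemma exists_map_add_sublist_onePatAux (s : ℕ) {c : List ℕ} (hc : c ∈ l) :
    ∃ s', (c.map (· + s')).Sublist (onePatAux s l) := by
  induction l generalizing s with
  | nil => simp at hc
  | cons d l ih =>
    rcases List.mem_cons.1 hc with rfl | hc
    · exact ⟨s, (List.sublist_append_left _ _).cons 1⟩
    · obtain ⟨s', hs'⟩ := ih (s + nLetters d) hc
      exact ⟨s', (hs'.trans (List.sublist_append_right _ _)).cons 1⟩

lemma PatContains.of_mem_onePat {w c : List ℕ} (h : PatContains w (onePat l)) (hc : c ∈ l) :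
    PatContains w c := by
  obtain ⟨s, hs⟩ := exists_map_add_sublist_onePatAux 1 hc
  exact (patContains_map_right_iff add_left_strictMono).1 (h.of_sublist hs)

lemma length_onePatAux : (onePatAux s l).length = (l.map fun c => c.length + 1).sum + 1 := by
  induction l generalizing s with
  | nil => rfl
  | cons c l ih =>
    simp only [onePatAux_cons, List.length_cons, List.length_append, List.length_map, ih,
      List.map_cons, List.sum_cons]
    ring

lemma max_nLetters_onePatAux (hs : 0 < s) :
    max s (nLetters (onePatAux s l)) = s + nLetters (rgfJoin l) := by
  induction l generalizing s with
  | nil => simpa using Nat.succ_le_of_lt hs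
  | cons c l ih =>
    have hc := max_nLetters_map_add c s
    have hl := ih (s := s + nLetters c) (by omega)
    simp only [onePatAux_cons, nLetters_cons, nLetters_append, rgfJoin_cons, nLetters_rgfComp]
    omega

lemma nLetters_onePat (l : List (List ℕ)) : nLetters (onePat l) = 1 + nLetters (rgfJoin l) := by
  obtain ⟨t, ht⟩ := exists_onePatAux_eq_cons 1 l
  have h := max_nLetters_onePatAux (l := l) one_pos
  rw [onePat]
  rw [ht, nLetters_cons] at *
  omega

lemma isRGFFrom_onePatAux (hl : ∀ c ∈ l, IsRGF c) : IsRGFFrom s (onePatAux s l) := by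
  induction l generalizing s with
  | nil => simp [IsRGFFrom]
  | cons c l ih =>
    rw [List.forall_mem_cons] at hl
    have hc : IsRGFFrom s (c.map (· + s)) := by
      simpa using (isRGFFrom_map_add_iff hl.1.1 (m := 0)).2 (isRGF_iff_isRGFFrom_zero.1 hl.1)
    refine ⟨one_pos, by omega, isRGFFrom_append.2 ⟨hc.mono (le_max_left s 1), ?_⟩⟩
    refine (ih hl.2).mono ?_
    have := max_nLetters_map_add c s
    omega

lemma isRGF_onePat (hl : ∀ c ∈ l, IsRGF c) : IsRGF (onePat l) := by
  obtain ⟨t, ht⟩ := exists_onePatAux_eq_cons 1 l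
  have h := isRGFFrom_onePatAux (s := 1) hl
  rw [isRGF_iff_isRGFFrom_zero, onePat]
  rw [ht] at *
  simpa [IsRGFFrom] using h

lemma nonCrossing_onePatAux (hs : 0 < s) (hl : ∀ c ∈ l, IsPositive c ∧ NonCrossing c) :
    NonCrossing (onePatAux s l) := by
  induction l generalizing s with
  | nil => exact nonCrossing_iff.2 fun x y _ hsub => by simpa using hsub.length_le
  | cons c l ih =>
    rw [List.forall_mem_cons] at hl
    rw [onePatAux_cons]
    set C := c.map (· + s)
    set R := onePatAux (s + nLetters c) l with hR
    have hRnc : NonCrossing R := ih (by omega) hl.2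
    have hone : 1 ∉ C := one_notMem_map_add hl.1.1 hs
    have hdisj : C.Disjoint R := by
      intro x hxC hxR
      obtain ⟨y, hy, rfl⟩ := List.mem_map.1 hxC
      have := hl.1.1 y hy
      have := le_nLetters_of_mem hy
      have := eq_one_or_lt_of_mem_onePatAux (fun d hd => (hl.2 d hd).1) hxR
      omega
    have hCR : NonCrossing (C ++ R) := (nonCrossing_map_add_iff.2 hl.1.2).append hRnc hdisj
    rw [nonCrossing_iff] at *
    intro x y hxy hsub
    rcases List.sublist_cons_iff.1 hsub with hsub | ⟨_, h, hsub⟩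
    · exact hCR x y hxy hsub
    obtain ⟨rfl, rfl⟩ : x = 1 ∧ [y, x, y] = _ := by simpa using h
    rcases sublist_or_sublist_of_sublist_append hsub rfl rfl
      (not_and_or.1 fun hy => hdisj hy.1 hy.2) with hsub | hsub
    · exact hone (hsub.subset (by simp))
    · obtain ⟨t, ht⟩ := exists_onePatAux_eq_cons (s + nLetters c) l
      rw [hR, ht] at hsub hRnc
      exact hRnc 1 y hxy ((hsub.of_cons_of_ne hxy.ne').cons_cons 1)

lemma exists_onePatAux_append {s : ℕ} (hs : 0 < s) {u : List ℕ} (hu : IsRGFFrom s u)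
    (hnc : NonCrossing (1 :: u)) (hmem : ∀ x ∈ u, x = 1 ∨ s < x) :
    ∃ l v, (∀ c ∈ l, IsRGF c) ∧ IsRGF v ∧
      1 :: u = onePatAux s l ++ v.map (· + (s + nLetters (rgfJoin l))) := by
  by_cases h1 : 1 ∈ u
  · obtain ⟨a, b, rfl, ha1⟩ := List.eq_append_cons_of_mem h1
    obtain ⟨ha, -, -, hb⟩ := isRGFFrom_append.1 hu
    obtain ⟨c, hc, rfl⟩ := ha.exists_isRGF_map_add fun x hx =>
      (hmem x (List.mem_append_left _ hx)).resolve_left fun h => ha1 (h ▸ hx)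
    have hmax := max_nLetters_map_add c s
    rw [hmax, max_eq_left (by omega : 1 ≤ s + nLetters c)] at hb
    have hbmem : ∀ x ∈ b, x = 1 ∨ s + nLetters c < x := by
      intro x hx
      refine or_iff_not_imp_left.2 fun hx1 => lt_of_not_ge fun hxle => ?_
      have hsx : s < x := (hmem x (by simp [hx])).resolve_left hx1
      have hxa : x ∈ c.map (· + s) := ha.mem_of_le_nLetters hsx (by omega)
      refine nonCrossing_iff.1 hnc 1 x (by omega) (List.Sublist.cons_cons 1 ?_)
      exact (List.singleton_sublist.2 hxa).append ((List.singleton_sublist.2 hx).cons_cons 1)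
    obtain ⟨l, v, hl, hv, hlv⟩ := exists_onePatAux_append (by omega) hb
      (hnc.mono (List.sublist_cons_of_sublist 1 (List.sublist_append_right _ _))) hbmem
    refine ⟨c :: l, v, List.forall_mem_cons.2 ⟨hc, hl⟩, hv, ?_⟩
    rw [hlv]
    simp [add_assoc]
  · obtain ⟨v, hv, rfl⟩ := hu.exists_isRGF_map_add fun x hx =>
      (hmem x hx).resolve_left fun h => h1 (h ▸ hx)
    exact ⟨[], v, by simp, hv, by simp⟩
termination_by u.length
decreasing_by subst_vars; simp; omega

lemma exists_eq_rgfComp_onePat {w : List ℕ} (hw : IsRGF w) (hnc : NonCrossing w) (hne : w ≠ []) :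
    ∃ l v, (∀ c ∈ l, IsRGF c ∧ NonCrossing c) ∧ (IsRGF v ∧ NonCrossing v) ∧
      w = rgfComp (onePat l) v := by
  obtain ⟨x, u, rfl⟩ := List.exists_cons_of_ne_nil hne
  obtain ⟨hx, hx1, hu⟩ := isRGF_iff_isRGFFrom_zero.1 hw
  obtain rfl : x = 1 := by omega
  have hmem : ∀ y ∈ u, y = 1 ∨ 1 < y := fun y hy => by
    have := hw.1 y (List.mem_cons_of_mem 1 hy)
    omega
  obtain ⟨l, v, hl, hv, h⟩ := exists_onePatAux_append one_pos hu hnc hmem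
  rw [← nLetters_onePat] at h
  have hlv : 1 :: u = rgfComp (onePat l) v := h
  rw [hlv] at hnc
  refine ⟨l, v, fun c hc => ⟨hl c hc, ?_⟩, ⟨hv, ?_⟩, hlv⟩
  · obtain ⟨s, hs⟩ := exists_map_add_sublist_onePatAux 1 hc
    exact nonCrossing_map_add_iff.1 (hnc.mono (hs.trans (List.sublist_append_left _ _)))
  · exact nonCrossing_map_add_iff.1 (hnc.mono (List.sublist_append_right _ _))

lemma append_cons_inj_of_notMem_left {α : Type*} {a : α} {u u' t t' : List α} (hu : a ∉ u)
    (hu' : a ∉ u') (h : u ++ a :: t = u' ++ a :: t') : u = u' ∧ t = t' := by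
  induction u generalizing u' with
  | nil => cases u' <;> grind
  | cons b u ih =>
    cases u' with
    | nil => grind
    | cons b' u' =>
      rw [List.mem_cons, not_or] at hu hu'
      obtain ⟨hb, htail⟩ := List.cons.inj h
      obtain ⟨rfl, rfl⟩ := ih hu.2 hu'.2 htail
      exact ⟨congrArg (· :: u) hb, rfl⟩

lemma map_add_injective (s : ℕ) : Function.Injective (List.map (· + s)) :=
  List.map_injective_iff.2 (add_left_injective s)

lemma onePatAux_append_map_inj (hs : 0 < s) (hl : ∀ c ∈ l, IsPositive c)
    (hl' : ∀ c ∈ l', IsPositive c) {v v' : List ℕ} (hv : IsPositive v) (hv' : IsPositive v')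
    (h : onePatAux s l ++ v.map (· + (s + nLetters (rgfJoin l))) =
      onePatAux s l' ++ v'.map (· + (s + nLetters (rgfJoin l')))) : l = l' ∧ v = v' := by
  induction l generalizing l' s with
  | nil =>
    cases l' with
    | nil => exact ⟨rfl, map_add_injective s (by simpa using h)⟩
    | cons c' l' =>
      obtain ⟨t', ht'⟩ := exists_onePatAux_eq_cons (s + nLetters c') l'
      have hmem : 1 ∈ v.map (· + (s + nLetters (rgfJoin []))) := by
        have htail : v.map _ = c'.map (· + s) ++ onePatAux (s + nLetters c') l' ++ v'.map _ :=
          (List.cons.inj h).2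
        rw [htail, ht']
        simp
      exact absurd hmem (one_notMem_map_add hv (by omega))
  | cons c l ih =>
    obtain ⟨t, ht⟩ := exists_onePatAux_eq_cons (s + nLetters c) l
    cases l' with
    | nil =>
      have hmem : 1 ∈ v'.map (· + (s + nLetters (rgfJoin []))) := by
        have htail : c.map (· + s) ++ onePatAux (s + nLetters c) l ++ v.map _ = v'.map _ :=
          (List.cons.inj h).2
        rw [← htail, ht]
        simp
      exact absurd hmem (one_notMem_map_add hv' (by omega))
    | cons c' l' =>
      obtain ⟨t', ht'⟩ := exists_onePatAux_eq_cons (s + nLetters c') l'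
      rw [List.forall_mem_cons] at hl hl'
      simp only [onePatAux_cons, ht, ht', List.cons_append, List.append_assoc, List.cons.injEq,
        true_and] at h
      obtain ⟨hc, h⟩ := append_cons_inj_of_notMem_left (one_notMem_map_add hl.1 hs)
        (one_notMem_map_add hl'.1 hs) h
      obtain rfl := map_add_injective s hc
      obtain ⟨rfl, rfl⟩ := ih (l' := l') (s := s + nLetters c) (by omega) hl.2 hl'.2
        (by rw [ht, ht']; simpa [add_assoc] using h)
      exact ⟨rfl, rfl⟩

lemma rgfComp_onePat_inj (hl : ∀ c ∈ l, IsPositive c) (hl' : ∀ c ∈ l', IsPositive c)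
    {v v' : List ℕ} (hv : IsPositive v) (hv' : IsPositive v')
    (h : rgfComp (onePat l) v = rgfComp (onePat l') v') : l = l' ∧ v = v' := by
  refine onePatAux_append_map_inj one_pos hl hl' hv hv' ?_
  rw [← nLetters_onePat, ← nLetters_onePat]
  exact h

lemma connected_onePat (l : List (List ℕ)) : Connected (onePat l) := by
  obtain ⟨t, ht⟩ := exists_onePatAux_eq_cons 1 l
  refine ⟨by simp [onePat, ht], ?_⟩
  rintro ⟨a, b, ha, hb, hane, hbne, h⟩
  obtain ⟨b, x, rfl⟩ := (List.eq_nil_or_concat b).resolve_left hbne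
  have hlast : x + nLetters a = 1 := by
    have := getLast?_onePatAux 1 l
    rw [← onePat, h] at this
    simpa [rgfComp, List.getLast?_append] using this
  have hx : 0 < x := hb.1 x (by simp)
  obtain ⟨y, hy⟩ := List.exists_mem_of_ne_nil a hane
  have hy0 : 0 < y := ha.1 y hy
  have := le_nLetters_of_mem hy
  omega

end OnePat

/-! ### Connected components -/

section Components

lemma exists_map_add_sublist_rgfJoin {l : List (List ℕ)} {c : List ℕ} (hc : c ∈ l) :
    ∃ s, (c.map (· + s)).Sublist (rgfJoin l) := by
  induction l with
  | nil => simp at hc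
  | cons d l ih =>
    rcases List.mem_cons.1 hc with rfl | hc
    · exact ⟨0, by simp [rgfComp]⟩
    · obtain ⟨s, hs⟩ := ih hc
      have hsd := hs.map (· + nLetters d)
      simp only [List.map_map, Function.comp_def, add_assoc] at hsd
      exact ⟨s + nLetters d, hsd.trans (List.sublist_append_right d _)⟩

/-- The connected non-crossing restricted growth functions, that is, the possible components of a
non-crossing restricted growth function. -/
abbrev ConnectedNC : Type := {w : List ℕ // IsRGF w ∧ NonCrossing w ∧ Connected w}

/-- The non-crossing restricted growth function with a given list of components. -/
def joinWord (l : List ConnectedNC) : List ℕ := rgfJoin (l.map Subtype.val)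

@[simp] lemma joinWord_nil : joinWord [] = [] := rfl

@[simp] lemma joinWord_cons (t : ConnectedNC) (l : List ConnectedNC) :
    joinWord (t :: l) = rgfComp t (joinWord l) := rfl

lemma joinWord_flatten (L : List (List ConnectedNC)) :
    joinWord L.flatten = rgfJoin (L.map joinWord) := by
  simp only [joinWord, List.map_flatten, rgfJoin_flatten, List.map_map]
  rfl

lemma length_joinWord (l : List ConnectedNC) :
    (joinWord l).length = (l.map fun t => t.1.length).sum := by
  induction l with
  | nil => rfl
  | cons t l ih => simp [ih]

lemma isRGF_joinWord (l : List ConnectedNC) : IsRGF (joinWord l) := by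
  induction l with
  | nil => exact isRGF_nil
  | cons t l ih => exact t.2.1.rgfComp ih

lemma isPositive_joinWord (l : List ConnectedNC) : IsPositive (joinWord l) := (isRGF_joinWord l).1

lemma nonCrossing_joinWord (l : List ConnectedNC) : NonCrossing (joinWord l) := by
  induction l with
  | nil => exact nonCrossing_nil
  | cons t l ih => exact t.2.2.1.rgfComp ih (isPositive_joinWord l)

lemma Connected.exists_eq_onePat {w : List ℕ} (h : Connected w) (hw : IsRGF w)
    (hnc : NonCrossing w) : ∃ l, (∀ c ∈ l, IsRGF c ∧ NonCrossing c) ∧ w = onePat l := by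
  obtain ⟨l, v, hl, hv, rfl⟩ := exists_eq_rgfComp_onePat hw hnc h.1
  rcases eq_or_ne v [] with rfl | hvne
  · exact ⟨l, hl, rgfComp_nil _⟩
  · exact absurd
      ⟨_, v, isRGF_onePat fun c hc => (hl c hc).1, hv.1, (connected_onePat l).1, hvne, rfl⟩ h.2

lemma joinWord_injective : Function.Injective joinWord := by
  intro l l' h
  induction l generalizing l' with
  | nil =>
    cases l' with
    | nil => rfl
    | cons t' l' => exact absurd (List.append_eq_nil_iff.1 h.symm).1 t'.2.2.2.1
  | cons t l ih =>
    cases l' with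
    | nil => exact absurd (List.append_eq_nil_iff.1 h).1 t.2.2.2.1
    | cons t' l' =>
      obtain ⟨m, hm, htm⟩ := t.2.2.2.exists_eq_onePat t.2.1 t.2.2.1
      obtain ⟨m', hm', htm'⟩ := t'.2.2.2.exists_eq_onePat t'.2.1 t'.2.2.1
      rw [joinWord_cons, joinWord_cons, htm, htm'] at h
      obtain ⟨rfl, hl⟩ := rgfComp_onePat_inj (fun c hc => (hm c hc).1.1)
        (fun c hc => (hm' c hc).1.1) (isPositive_joinWord l) (isPositive_joinWord l') h
      rw [Subtype.ext (htm.trans htm'.symm), ih hl]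

/-- The connected non-crossing word `1[c₁]1⋯1[c_k]1`, where each `cᵢ` is given by its components. -/
def nestWord (L : List (List ConnectedNC)) : ConnectedNC :=
  ⟨onePat (L.map joinWord), isRGF_onePat (by simp [isRGF_joinWord]),
    nonCrossing_onePatAux one_pos (by
      simp only [List.forall_mem_map]
      exact fun l _ => ⟨isPositive_joinWord l, nonCrossing_joinWord l⟩),
    connected_onePat _⟩

lemma exists_joinWord_eq {w : List ℕ} (hw : IsRGF w) (hnc : NonCrossing w) :
    ∃ l, joinWord l = w := by
  rcases eq_or_ne w [] with rfl | hne
  · exact ⟨[], rfl⟩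
  obtain ⟨m, v, hm, hv, rfl⟩ := exists_eq_rgfComp_onePat hw hnc hne
  have hlen : (onePat m).length = _ := length_onePatAux
  have hmem : ∀ c ∈ m, c ∈ Set.range joinWord := fun c hc => by
    have : c.length + 1 ≤ _ :=
      List.le_sum_of_mem (List.mem_map_of_mem (f := fun c => c.length + 1) hc)
    exact exists_joinWord_eq (hm c hc).1 (hm c hc).2
  obtain ⟨L, rfl⟩ : m ∈ Set.range (List.map joinWord) := by rwa [Set.range_list_map]
  obtain ⟨l, rfl⟩ := exists_joinWord_eq hv.1 hv.2
  exact ⟨nestWord L :: l, rfl⟩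
termination_by w.length
decreasing_by
  all_goals
    subst_vars
    rw [length_rgfComp]
    omega

lemma nestWord_bijective : Function.Bijective nestWord := by
  constructor
  · intro L L' h
    have hpos : ∀ M : List (List ConnectedNC), ∀ c ∈ M.map joinWord, IsPositive c := by
      simpa only [List.forall_mem_map] using fun _ l _ => isPositive_joinWord l
    have hnil : IsPositive [] := List.forall_mem_nil _
    exact List.map_injective_iff.2 joinWord_injective
      (rgfComp_onePat_inj (hpos L) (hpos L') hnil hnil
        (congrArg (rgfComp · []) (congrArg Subtype.val h))).1
  · intro t
    obtain ⟨m, hm, htm⟩ := t.2.2.2.exists_eq_onePat t.2.1 t.2.2.1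
    obtain ⟨L, rfl⟩ : m ∈ Set.range (List.map joinWord) := by
      rw [Set.range_list_map]
      exact fun c hc => exists_joinWord_eq (hm c hc).1 (hm c hc).2
    exact ⟨L, Subtype.ext htm.symm⟩

lemma ncCount_eq_ncard_components (n p : ℕ) (σ : List ℕ) : ncCount n p σ =
    {l : List ConnectedNC | PatAvoids (joinWord l) σ ∧ l.length = p ∧
      (joinWord l).length = n}.ncard := by
  rw [ncCount, ← Set.ncard_image_of_injective _ joinWord_injective]
  congr 1
  ext w
  constructor
  · rintro ⟨-, hnc, hlen, hav, m, hmp, hm, rfl⟩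
    obtain ⟨l, rfl⟩ : m ∈ Set.range (List.map (Subtype.val : ConnectedNC → List ℕ)) := by
      rw [Set.range_list_map]
      rintro c hc
      obtain ⟨s, hs⟩ := exists_map_add_sublist_rgfJoin hc
      exact ⟨⟨c, (hm c hc).1, nonCrossing_map_add_iff.1 (hnc.mono hs), (hm c hc).2⟩, rfl⟩
    exact ⟨l, ⟨hav, by simpa using hmp, hlen⟩, rfl⟩
  · rintro ⟨l, ⟨hav, hlp, hlen⟩, rfl⟩
    refine ⟨isRGF_joinWord l, nonCrossing_joinWord l, hlen, hav, l.map Subtype.val,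
      by simpa using hlp, ?_, rfl⟩
    simpa using fun t ht hnc hc _ => ⟨ht, hc⟩

end Components

/-! ### Occurrences of the pattern `1[c₁]1⋯1[c_k]1` -/

section Occurrences

variable {α β : Type*} {S ws : List (List ℕ)} {s s₀ : ℕ}

/-- The concatenation of two languages. Languages are plain sets of lists here, since they are
complemented and counted as sets. -/
def concat (Y K : Set (List α)) : Set (List α) := Set.image2 (· ++ ·) Y K

/-- For languages `Y₁, …, Y_k`, the words `v₁⋯v_k u` with every `vᵢ` outside `Yᵢ` and `u`
arbitrary. -/
def cutLang (Ys : List (Set (List α))) : Set (List α) :=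
  Ys.foldr (fun Y K => concat Yᶜ K) Set.univ

lemma mem_cutLang_nil (u : List α) : u ∈ cutLang [] := Set.mem_univ u

lemma mem_cutLang_cons {Y : Set (List α)} {Ys : List (Set (List α))} {u : List α} :
    u ∈ cutLang (Y :: Ys) ↔ ∃ v ∉ Y, ∃ w ∈ cutLang Ys, v ++ w = u :=
  Set.mem_image2

lemma map_mem_cutLang_iff (f : α → β) {Ys : List (Set (List β))} {u : List α} :
    u.map f ∈ cutLang Ys ↔ u ∈ cutLang (Ys.map (List.map f ⁻¹' ·)) := by
  induction Ys generalizing u with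
  | nil => exact iff_of_true (mem_cutLang_nil _) (mem_cutLang_nil _)
  | cons Y Ys ih =>
    rw [List.map_cons, mem_cutLang_cons, mem_cutLang_cons]
    constructor
    · rintro ⟨v, hv, w, hw, h⟩
      obtain ⟨v, w, rfl, rfl, rfl⟩ := List.map_eq_append_iff.1 h.symm
      exact ⟨v, hv, w, ih.1 hw, rfl⟩
    · rintro ⟨v, hv, w, hw, rfl⟩
      exact ⟨_, hv, _, ih.2 hw, List.map_append.symm⟩

/-- The sequences of words whose join avoids `c`, together with the empty sequence: the pieces of
the host `1[w₁]1⋯1[w_m]1` cut out by consecutive matched letters `1` are never empty. -/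
def avoidLang (c : List ℕ) : Set (List (List ℕ)) := {ws | ws = [] ∨ PatAvoids (rgfJoin ws) c}

lemma notMem_avoidLang {c : List ℕ} :
    ws ∉ avoidLang c ↔ ws ≠ [] ∧ PatContains (rgfJoin ws) c := by
  simp [avoidLang, PatAvoids]

lemma exists_sublist_of_sublist_onePatAux (hws : ∀ w ∈ ws, IsPositive w) {u : List ℕ} {x : ℕ}
    (hu : u.Sublist (onePatAux s ws)) (hhead : u.head? = some x) (hlast : u.getLast? = some x)
    (h1 : 1 ∉ u) : ∃ w ∈ ws, ∃ s', u.Sublist (w.map (· + s')) := by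
  induction ws generalizing s with
  | nil =>
    have hx := hu.subset (List.mem_of_mem_head? hhead)
    obtain rfl : x = 1 := by simpa using hx
    exact absurd (List.mem_of_mem_head? hhead) h1
  | cons w ws ih =>
    rw [List.forall_mem_cons] at hws
    have hu' : u.Sublist (w.map (· + s) ++ onePatAux (s + nLetters w) ws) := by
      rcases List.sublist_cons_iff.1 hu with hu | ⟨t, rfl, -⟩
      · exact hu
      · simp at h1
    have hx1 : x ≠ 1 := fun h => h1 (h ▸ List.mem_of_mem_head? hhead)
    have hx : x ∉ w.map (· + s) ∨ x ∉ onePatAux (s + nLetters w) ws := by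
      rw [← not_and_or]
      rintro ⟨hxw, hxws⟩
      obtain ⟨y, hy, rfl⟩ := List.mem_map.1 hxw
      have := le_nLetters_of_mem hy
      have := eq_one_or_lt_of_mem_onePatAux hws.2 hxws
      omega
    rcases sublist_or_sublist_of_sublist_append hu' hhead hlast hx with hu | hu
    · exact ⟨w, List.mem_cons_self, s, hu⟩
    · obtain ⟨w', hw', h⟩ := ih hws.2 hu
      exact ⟨w', List.mem_cons_of_mem w hw', h⟩

lemma exists_append_of_sublist_onePatAux (hws : ∀ w ∈ ws, IsPositive w) (hs : 0 < s)
    {u t : List ℕ} (hu : 1 ∉ u) (h : (1 :: (u ++ 1 :: t)).Sublist (onePatAux s ws)) :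
    ∃ V U, V ≠ [] ∧ V ++ U = ws ∧ u.Sublist ((rgfJoin V).map (· + s)) ∧
      (1 :: t).Sublist (onePatAux (s + nLetters (rgfJoin V)) U) := by
  induction ws generalizing s u with
  | nil => simpa using h.length_le
  | cons w ws ih =>
    rw [List.forall_mem_cons] at hws
    obtain ⟨p, q, hpq, hp, hq⟩ := List.sublist_append_iff.1 (List.cons_sublist_cons.1 h)
    have hp1 : 1 ∉ p := fun h1 => one_notMem_map_add hws.1 hs (hp.subset h1)
    obtain ⟨u', rfl, rfl⟩ : ∃ u', u = p ++ u' ∧ q = u' ++ 1 :: t := by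
      rcases List.append_eq_append_iff.1 hpq with ⟨v, rfl, hv⟩ | h
      · cases v with
        | nil => exact ⟨[], by simp, hv.symm⟩
        | cons x v => exact absurd (by simp [(List.cons.inj hv).1]) hp1
      · exact h
    cases u' with
    | nil => exact ⟨[w], ws, by simp, rfl, by simpa using hp, by simpa using hq⟩
    | cons x u' =>
      obtain ⟨t', ht'⟩ := exists_onePatAux_eq_cons (s + nLetters w) ws
      have hq' : (1 :: (x :: u' ++ 1 :: t)).Sublist (onePatAux (s + nLetters w) ws) := by
        rw [ht'] at hq ⊢
        refine List.Sublist.cons_cons 1 (hq.of_cons_of_ne ?_)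
        rintro rfl
        simp at hu
      obtain ⟨V, U, -, rfl, hV, hU⟩ := ih hws.2 (by omega) (fun h1 => hu (by simp [h1])) hq'
      refine ⟨w :: V, U, by simp, rfl, ?_, by simpa [add_assoc] using hU⟩
      rw [rgfJoin_cons, map_add_rgfComp]
      exact hp.append hV

lemma cons_map_rgfJoin_append_sublist_onePatAux (s : ℕ) {V : List (List ℕ)} (hV : V ≠ [])
    (U : List (List ℕ)) :
    (1 :: ((rgfJoin V).map (· + s) ++ onePatAux (s + nLetters (rgfJoin V)) U)).Sublist
      (onePatAux s (V ++ U)) := by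
  induction V generalizing s with
  | nil => exact absurd rfl hV
  | cons w V ih =>
    rcases eq_or_ne V [] with rfl | hV
    · simp
    · have h := (List.sublist_cons_self 1 _).trans (ih (s + nLetters w) hV)
      simp only [rgfJoin_cons, map_add_rgfComp, nLetters_rgfComp, List.append_assoc,
        ← add_assoc s]
      exact (h.append_left _).cons_cons 1

lemma mem_cutLang_of_orderMatching (hws : ∀ w ∈ ws, IsPositive w) (hS : ∀ c ∈ S, IsPositive c)
    (hs : 0 < s) (hs₀ : 0 < s₀) {z : List (ℕ × ℕ)} (hz : OrderMatching z)
    (hone : ∀ a ∈ z, a.1 = 1 ↔ a.2 = 1) (hfst : (z.map Prod.fst).Sublist (onePatAux s ws))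
    (hsnd : z.map Prod.snd = onePatAux s₀ S) : ws ∈ cutLang (S.map avoidLang) := by
  induction S generalizing ws s s₀ z with
  | nil => exact mem_cutLang_nil ws
  | cons c S ih =>
    rw [List.forall_mem_cons] at hS
    obtain ⟨⟨x, -⟩, z', rfl, rfl, hz'⟩ := List.map_eq_cons_iff.1 hsnd
    obtain ⟨z₀, z₁, rfl, hz₀, hz₁⟩ := List.map_eq_append_iff.1 hz'
    obtain ⟨t, ht⟩ := exists_onePatAux_eq_cons (s₀ + nLetters c) S
    obtain ⟨⟨y, -⟩, z₂, rfl, rfl, -⟩ := List.map_eq_cons_iff.1 (hz₁.trans ht)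
    obtain rfl : x = 1 := (hone (x, 1) (by simp)).2 rfl
    obtain rfl : y = 1 := (hone (y, 1) (by simp)).2 rfl
    have hz₀one : 1 ∉ z₀.map Prod.fst := by
      rintro h
      obtain ⟨a, ha, ha1⟩ := List.mem_map.1 h
      refine one_notMem_map_add hS.1 hs₀ (hz₀ ▸ List.mem_map.2 ⟨a, ha, ?_⟩)
      exact (hone a (by simp [ha])).1 ha1
    obtain ⟨V, U, hV, rfl, hz₀V, hU⟩ :=
      exists_append_of_sublist_onePatAux hws hs hz₀one (by simpa using hfst)
    have hVc : PatContains ((rgfJoin V).map (· + s)) (c.map (· + s₀)) :=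
      patContains_iff_exists_orderMatching.2
        ⟨z₀, hz.mono (by simp), hz₀V, hz₀⟩
    rw [patContains_map_iff add_left_strictMono,
      patContains_map_right_iff add_left_strictMono] at hVc
    have hUS : U ∈ cutLang (S.map avoidLang) :=
      ih (z := (1, 1) :: z₂) (List.forall_mem_append.1 hws).2 hS.2 (by omega) (by omega)
        (hz.mono (by simp)) (fun a ha => hone a (by simp_all)) hU hz₁
    exact mem_cutLang_cons.2 ⟨V, notMem_avoidLang.2 ⟨hV, hVc⟩, U, hUS, rfl⟩

lemma orderMatching_glue {z₀ z₁ : List (ℕ × ℕ)} {m m₀ : ℕ} (hs : 0 < s) (hs₀ : 0 < s₀)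
    (hz₀ : OrderMatching z₀) (hz₁ : OrderMatching z₁)
    (hmem₀ : ∀ a ∈ z₀, (0 < a.1 ∧ a.1 ≤ m) ∧ 0 < a.2 ∧ a.2 ≤ m₀)
    (hmem₁ : ∀ a ∈ z₁, a = (1, 1) ∨ s + m < a.1 ∧ s₀ + m₀ < a.2) :
    OrderMatching ((1, 1) :: (z₀.map (Prod.map (· + s) (· + s₀)) ++ z₁)) := by
  have hcases : ∀ a ∈ (1, 1) :: (z₀.map (Prod.map (· + s) (· + s₀)) ++ z₁), a = (1, 1) ∨
      (∃ a' ∈ z₀, a = (a'.1 + s, a'.2 + s₀)) ∨ a ∈ z₁ ∧ s + m < a.1 ∧ s₀ + m₀ < a.2 := by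
    intro a ha
    simp only [List.mem_cons, List.mem_append, List.mem_map] at ha
    rcases ha with rfl | ⟨a', ha', rfl⟩ | ha
    · exact Or.inl rfl
    · exact Or.inr (Or.inl ⟨a', ha', rfl⟩)
    · exact (hmem₁ a ha).imp_right fun h => Or.inr ⟨ha, h⟩
  intro a ha b hb
  rcases hcases a ha with rfl | ⟨a', ha', rfl⟩ | ⟨ha', hlt⟩ <;>
    rcases hcases b hb with rfl | ⟨b', hb', rfl⟩ | ⟨hb', hlt'⟩
  · simp
  · have := hmem₀ b' hb'
    dsimp only
    omega
  · dsimp only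
    omega
  · have := hmem₀ a' ha'
    dsimp only
    omega
  · simpa using hz₀ a' ha' b' hb'
  · have := hmem₀ a' ha'
    dsimp only
    omega
  · dsimp only
    omega
  · have := hmem₀ b' hb'
    dsimp only
    omega
  · exact hz₁ a ha' b hb'

lemma exists_orderMatching_of_mem_cutLang (hws : ∀ w ∈ ws, IsPositive w)
    (hS : ∀ c ∈ S, IsPositive c) (hs : 0 < s) (hs₀ : 0 < s₀)
    (h : ws ∈ cutLang (S.map avoidLang)) :
    ∃ z, OrderMatching z ∧ (∀ a ∈ z, a = (1, 1) ∨ s < a.1 ∧ s₀ < a.2) ∧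
      (z.map Prod.fst).Sublist (onePatAux s ws) ∧ z.map Prod.snd = onePatAux s₀ S := by
  induction S generalizing ws s s₀ with
  | nil =>
    obtain ⟨t, ht⟩ := exists_onePatAux_eq_cons s ws
    exact ⟨[(1, 1)], by simp [OrderMatching], by simp, by simp [ht], rfl⟩
  | cons c S ih =>
    rw [List.forall_mem_cons] at hS
    obtain ⟨V, hV, U, hU, rfl⟩ := mem_cutLang_cons.1 h
    obtain ⟨hVne, hVc⟩ := notMem_avoidLang.1 hV
    rw [List.forall_mem_append] at hws
    obtain ⟨z₀, hz₀, hfst₀, rfl⟩ := patContains_iff_exists_orderMatching.1 hVc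
    obtain ⟨z₁, hz₁, hmem₁, hfst₁, hsnd₁⟩ := ih (s := s + nLetters (rgfJoin V))
      (s₀ := s₀ + nLetters (z₀.map Prod.snd)) hws.2 hS.2 (by omega) (by omega) hU
    have hmem₀ : ∀ a ∈ z₀, (0 < a.1 ∧ a.1 ≤ nLetters (rgfJoin V)) ∧
        0 < a.2 ∧ a.2 ≤ nLetters (z₀.map Prod.snd) := fun a ha =>
      have hfst := hfst₀.subset (List.mem_map_of_mem ha)
      have hsnd := List.mem_map_of_mem (f := Prod.snd) ha
      ⟨⟨isPositive_rgfJoin hws.1 _ hfst, le_nLetters_of_mem hfst⟩,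
        hS.1 _ hsnd, le_nLetters_of_mem hsnd⟩
    refine ⟨_, orderMatching_glue hs hs₀ hz₀ hz₁ hmem₀ hmem₁, ?_, ?_, ?_⟩
    · simp only [List.mem_cons, List.mem_append, List.mem_map]
      rintro a (rfl | ⟨a, ha, rfl⟩ | ha)
      · exact Or.inl rfl
      · have := hmem₀ a ha
        simp only [Prod.map_fst, Prod.map_snd]
        omega
      · exact (hmem₁ a ha).imp_right fun h => by omega
    · refine List.Sublist.trans ?_ (cons_map_rgfJoin_append_sublist_onePatAux s hVne U)
      have h := (hfst₀.map (· + s)).append hfst₁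
      simpa [Function.comp_def] using h
    · simp [hsnd₁, Function.comp_def]

lemma OrderMatching.exists_head?_getLast? {z : List (ℕ × ℕ)} (hz : OrderMatching z)
    (hsnd : z.map Prod.snd = onePat S) :
    ∃ x, (x, 1) ∈ z ∧ (z.map Prod.fst).head? = some x ∧ (z.map Prod.fst).getLast? = some x := by
  have hhead := head?_onePatAux 1 S
  have hlast := getLast?_onePatAux 1 S
  rw [← onePat, ← hsnd] at hhead hlast
  rw [List.head?_map, Option.map_eq_some_iff] at hhead
  rw [List.getLast?_map, Option.map_eq_some_iff] at hlast
  obtain ⟨⟨x, -⟩, ha, rfl⟩ := hhead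
  obtain ⟨⟨y, -⟩, hb, rfl⟩ := hlast
  have hamem := List.mem_of_mem_head? ha
  obtain rfl : x = y := (hz.eq_iff hamem (List.mem_of_mem_getLast? hb)).2 rfl
  exact ⟨x, hamem, by rw [List.head?_map, ha]; rfl, by rw [List.getLast?_map, hb]; rfl⟩

theorem patContains_onePat_iff (hws : ∀ w ∈ ws, IsPositive w) (hS : ∀ c ∈ S, IsPositive c) :
    PatContains (onePat ws) (onePat S) ↔
      (∃ w ∈ ws, PatContains w (onePat S)) ∨ ws ∈ cutLang (S.map avoidLang) := by
  constructor
  · rw [patContains_iff_exists_orderMatching]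
    rintro ⟨z, hz, hfst, hsnd⟩
    obtain ⟨x, hx, hhead, hlast⟩ := hz.exists_head?_getLast? hsnd
    rcases eq_or_ne x 1 with rfl | hx1
    · exact Or.inr (mem_cutLang_of_orderMatching hws hS one_pos one_pos hz
        (fun a ha => hz.eq_iff ha hx) hfst hsnd)
    · have h1 : 1 ∉ z.map Prod.fst := by
        rintro h
        obtain ⟨a, ha, ha1⟩ := List.mem_map.1 h
        have hxpos := isPositive_onePatAux hws _ (hfst.subset (List.mem_map_of_mem hx))
        have ha2 := isPositive_onePatAux hS (s := 1) _ (hsnd ▸ List.mem_map_of_mem ha)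
        have := hz a ha _ hx
        omega
      obtain ⟨w, hw, s, hzw⟩ := exists_sublist_of_sublist_onePatAux hws hfst hhead hlast h1
      have hcontains : PatContains (w.map (· + s)) (onePat S) :=
        patContains_iff_exists_orderMatching.2 ⟨z, hz, hzw, hsnd⟩
      exact Or.inl ⟨w, hw, (patContains_map_iff add_left_strictMono).1 hcontains⟩
  · rintro (⟨w, hw, h⟩ | h)
    · obtain ⟨s, hs⟩ := exists_map_add_sublist_onePatAux 1 hw
      exact ((patContains_map_iff add_left_strictMono).2 h).mono hs
    · obtain ⟨z, hz, -, hfst, hsnd⟩ :=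
        exists_orderMatching_of_mem_cutLang hws hS one_pos one_pos h
      exact patContains_iff_exists_orderMatching.2 ⟨z, hz, hfst, hsnd⟩

lemma patContains_rgfComp_onePat_iff {a b : List ℕ} (hb : IsPositive b) :
    PatContains (rgfComp a b) (onePat S) ↔ PatContains a (onePat S) ∨ PatContains b (onePat S) := by
  rw [← patContains_map_iff (w := b) add_left_strictMono]
  constructor
  · intro h
    obtain ⟨z, hz, hfst, hsnd⟩ := patContains_iff_exists_orderMatching.1 h
    obtain ⟨x, -, hhead, hlast⟩ := hz.exists_head?_getLast? hsnd
    have hx : x ∉ a ∨ x ∉ b.map (· + nLetters a) := by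
      rw [← not_and_or]
      rintro ⟨hxa, hxb⟩
      obtain ⟨y, hy, rfl⟩ := List.mem_map.1 hxb
      have := le_nLetters_of_mem hxa
      have := hb y hy
      omega
    exact (sublist_or_sublist_of_sublist_append hfst hhead hlast hx).imp
      (fun h => patContains_iff_exists_orderMatching.2 ⟨z, hz, h, hsnd⟩)
      (fun h => patContains_iff_exists_orderMatching.2 ⟨z, hz, h, hsnd⟩)
  · exact Or.rec (fun h => h.mono (List.sublist_append_left _ _))
      (fun h => h.mono (List.sublist_append_right _ _))

lemma patAvoids_joinWord_onePat_iff {l : List ConnectedNC} :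
    PatAvoids (joinWord l) (onePat S) ↔ ∀ t ∈ l, PatAvoids t.1 (onePat S) := by
  induction l with
  | nil =>
    obtain ⟨t, ht⟩ := exists_onePatAux_eq_cons 1 S
    simp [PatAvoids, PatContains, WordOrdIso, onePat, ht]
  | cons t l ih =>
    rw [List.forall_mem_cons, ← ih]
    simp only [joinWord_cons, PatAvoids, patContains_rgfComp_onePat_iff (isPositive_joinWord l),
      not_or]

/-- `avoidLang c` for words presented by their components. -/
def avoidComponents (c : List ℕ) : Set (List (List ConnectedNC)) :=
  {L | L = [] ∨ PatAvoids (joinWord L.flatten) c}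

lemma patAvoids_nestWord_onePat_iff (hS : ∀ c ∈ S, IsPositive c) {L : List (List ConnectedNC)} :
    PatAvoids (nestWord L).1 (onePat S) ↔
      (∀ l ∈ L, PatAvoids (joinWord l) (onePat S)) ∧ L ∉ cutLang (S.map avoidComponents) := by
  have hpre : ∀ c, List.map joinWord ⁻¹' avoidLang c = avoidComponents c := by
    intro c
    ext L
    simp [avoidLang, avoidComponents, joinWord_flatten]
  have hpos : ∀ w ∈ L.map joinWord, IsPositive w :=
    List.forall_mem_map.2 fun l _ => isPositive_joinWord l
  change ¬ PatContains (onePat (L.map joinWord)) (onePat S) ↔ _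
  rw [patContains_onePat_iff hpos hS, map_mem_cutLang_iff, List.map_map]
  simp [PatAvoids, Function.comp_def, hpre]

end Occurrences

/-! ### Generating series of weighted sets -/

section GenSeries

open PowerSeries

variable {α β : Type*} {wt : α → ℕ} {wt' : β → ℕ} {s t : Set α}

/-- The condition on a weight that makes generating series meaningful: there are finitely many
elements of each weight. -/
def FiniteFibers (wt : α → ℕ) : Prop := ∀ n, {a | wt a = n}.Finite

/-- The generating series `∑_{a ∈ s} X ^ wt a`. Its coefficients are cardinalities `Set.ncard`,
which are `0` for infinite sets. -/
noncomputable def genSeries (wt : α → ℕ) (s : Set α) : ℤ⟦X⟧ :=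
  mk fun n => ({a ∈ s | wt a = n}.ncard : ℤ)

@[simp] lemma coeff_genSeries (n : ℕ) :
    coeff n (genSeries wt s) = ({a ∈ s | wt a = n}.ncard : ℤ) := coeff_mk _ _

lemma FiniteFibers.sep (hwt : FiniteFibers wt) (s : Set α) (n : ℕ) : {a ∈ s | wt a = n}.Finite :=
  (hwt n).subset fun _ ha => ha.2

lemma FiniteFibers.comp_injective (hwt : FiniteFibers wt) {f : β → α}
    (hf : Function.Injective f) : FiniteFibers (wt ∘ f) :=
  fun n => (hwt n).preimage hf.injOn

@[simp] lemma genSeries_empty : genSeries wt ∅ = 0 := by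
  ext n
  simp

lemma genSeries_singleton (a : α) : genSeries wt {a} = X ^ wt a := by
  ext n
  rw [coeff_genSeries, coeff_X_pow]
  split_ifs with h
  · have : {b ∈ ({a} : Set α) | wt b = n} = {a} := by
      ext b
      simp +contextual [h]
    rw [this]
    simp
  · have : {b ∈ ({a} : Set α) | wt b = n} = ∅ := by
      ext b
      simpa using fun hb hn => h (by rw [← hn, hb])
    rw [this]
    simp

lemma genSeries_union (hwt : FiniteFibers wt) (hst : Disjoint s t) :
    genSeries wt (s ∪ t) = genSeries wt s + genSeries wt t := by
  ext n
  rw [map_add, coeff_genSeries, coeff_genSeries, coeff_genSeries, ← Nat.cast_add,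
    ← Set.ncard_union_eq (hst.mono (Set.sep_subset _ _) (Set.sep_subset _ _)) (hwt.sep s n)
      (hwt.sep t n)]
  congr 2
  ext a
  simp [or_and_right]

lemma genSeries_image {f : α → β} (hf : Set.InjOn f s) {k : ℕ}
    (hwt : ∀ a ∈ s, wt' (f a) = wt a + k) : genSeries wt' (f '' s) = X ^ k * genSeries wt s := by
  ext n
  rw [coeff_X_pow_mul', coeff_genSeries]
  split_ifs with hk
  · rw [coeff_genSeries, ← (hf.mono (Set.sep_subset s _)).ncard_image]
    congr 2
    ext b
    constructor
    · rintro ⟨⟨a, ha, rfl⟩, hn⟩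
      exact ⟨a, ⟨ha, by rw [hwt a ha] at hn; omega⟩, rfl⟩
    · rintro ⟨a, ⟨ha, hn⟩, rfl⟩
      exact ⟨⟨a, ha, rfl⟩, by rw [hwt a ha]; omega⟩
  · have : {b ∈ f '' s | wt' b = n} = ∅ := by
      refine Set.eq_empty_of_forall_notMem ?_
      rintro _ ⟨⟨a, ha, rfl⟩, hn⟩
      rw [hwt a ha] at hn
      omega
    rw [this]
    simp

lemma genSeries_prod (hwt : FiniteFibers wt) (hwt' : FiniteFibers wt') (s : Set α) (t : Set β) :
    genSeries (fun p : α × β => wt p.1 + wt' p.2) (s ×ˢ t) = genSeries wt s * genSeries wt' t := by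
  ext n
  have hfib : {p ∈ s ×ˢ t | wt p.1 + wt' p.2 = n} =
      ⋃ ij ∈ (Finset.HasAntidiagonal.antidiagonal n : Set (ℕ × ℕ)),
        {a ∈ s | wt a = ij.1} ×ˢ {b ∈ t | wt' b = ij.2} := by
    ext p
    rw [Set.mem_iUnion₂]
    constructor
    · rintro ⟨⟨hs, ht⟩, hn⟩
      exact ⟨(wt p.1, wt' p.2), Finset.HasAntidiagonal.mem_antidiagonal.2 hn, ⟨hs, rfl⟩, ht, rfl⟩
    · rintro ⟨ij, hij, ⟨hs, hi⟩, ht, hj⟩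
      exact ⟨⟨hs, ht⟩, by rw [hi, hj, Finset.HasAntidiagonal.mem_antidiagonal.1 hij]⟩
  have hdisj : (Finset.HasAntidiagonal.antidiagonal n : Set (ℕ × ℕ)).PairwiseDisjoint
      fun ij => {a ∈ s | wt a = ij.1} ×ˢ {b ∈ t | wt' b = ij.2} := by
    rintro ij - ij' - hne
    rw [Function.onFun, Set.disjoint_left]
    rintro p ⟨⟨-, hi⟩, -, hj⟩ ⟨⟨-, hi'⟩, -, hj'⟩
    exact hne (Prod.ext (hi.symm.trans hi') (hj.symm.trans hj'))
  rw [coeff_mul, coeff_genSeries, hfib, Set.Finite.ncard_biUnion (Finset.finite_toSet _)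
    (fun ij _ => (hwt.sep s _).prod (hwt'.sep t _)) hdisj, finsum_mem_coe_finset, Nat.cast_sum]
  simp only [Set.ncard_prod, Nat.cast_mul, coeff_genSeries]

lemma genSeries_image2 {γ : Type*} {wt'' : γ → ℕ} (hwt : FiniteFibers wt)
    (hwt' : FiniteFibers wt') {f : α → β → γ} {t : Set β}
    (hf : Set.InjOn (Function.uncurry f) (s ×ˢ t))
    (hadd : ∀ a b, wt'' (f a b) = wt a + wt' b) :
    genSeries wt'' (Set.image2 f s t) = genSeries wt s * genSeries wt' t := by
  rw [← Set.image_uncurry_prod, genSeries_image (wt := fun p : α × β => wt p.1 + wt' p.2) (k := 0)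
    hf fun p _ => hadd p.1 p.2, pow_zero, one_mul, genSeries_prod hwt hwt']

lemma genSeries_eq_of_fiberwise {κ : Type*} {s : Set α} {t : Set β} (hwt : FiniteFibers wt)
    (hwt' : FiniteFibers wt') (f : α → κ) (g : β → κ)
    (h : ∀ k n, {a ∈ s | f a = k ∧ wt a = n}.ncard = {b ∈ t | g b = k ∧ wt' b = n}.ncard) :
    genSeries wt s = genSeries wt' t := by
  classical
  ext n
  rw [coeff_genSeries, coeff_genSeries, Nat.cast_inj]
  set A := (hwt.sep s n).toFinset
  set B := (hwt'.sep t n).toFinset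
  have hA : ∀ k, {a ∈ s | f a = k ∧ wt a = n}.ncard = (A.filter (f · = k)).card := fun k => by
    rw [← Set.ncard_coe_finset]
    congr 1
    ext a
    simp [A, and_comm, and_assoc]
  have hB : ∀ k, {b ∈ t | g b = k ∧ wt' b = n}.ncard = (B.filter (g · = k)).card := fun k => by
    rw [← Set.ncard_coe_finset]
    congr 1
    ext b
    simp [B, and_comm, and_assoc]
  rw [Set.ncard_eq_toFinset_card _ (hwt.sep s n), Set.ncard_eq_toFinset_card _ (hwt'.sep t n),
    Finset.card_eq_sum_card_fiberwise (f := f) (t := A.image f ∪ B.image g)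
      fun a ha => Finset.mem_union_left _ (Finset.mem_image_of_mem f ha),
    Finset.card_eq_sum_card_fiberwise (f := g) (t := A.image f ∪ B.image g)
      fun b hb => Finset.mem_union_right _ (Finset.mem_image_of_mem g hb)]
  exact Finset.sum_congr rfl fun k _ => by rw [← hA, ← hB, h]

end GenSeries

/-! ### Generating series of languages -/

section Languages

open PowerSeries

variable {α : Type*} {wt : α → ℕ} {B : Set α} {Y K : Set (List α)}

/-- The extension of a weight of letters to words. -/
def listWeight (wt : α → ℕ) (u : List α) : ℕ := (u.map wt).sum

@[simp] lemma listWeight_nil : listWeight wt [] = 0 := rfl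

@[simp] lemma listWeight_cons (a : α) (u : List α) :
    listWeight wt (a :: u) = wt a + listWeight wt u := by
  simp [listWeight]

@[simp] lemma listWeight_append (u v : List α) :
    listWeight wt (u ++ v) = listWeight wt u + listWeight wt v := by
  simp [listWeight]

lemma FiniteFibers.of_listWeight (hwt : FiniteFibers (listWeight wt)) : FiniteFibers wt := by
  have hcomp : listWeight wt ∘ (fun a => [a]) = wt := by
    ext a
    simp
  exact hcomp ▸ hwt.comp_injective List.singleton_injective

lemma genSeries_listWeight_singleton_nil : genSeries (listWeight wt) {[]} = 1 := by
  rw [genSeries_singleton, listWeight_nil, pow_zero]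

/-- The words with letters in `B`. -/
def wordsOver (B : Set α) : Set (List α) := {u | ∀ b ∈ u, b ∈ B}

lemma nil_mem_wordsOver : [] ∈ wordsOver B := List.forall_mem_nil _

lemma cons_mem_wordsOver {b : α} {u : List α} :
    b :: u ∈ wordsOver B ↔ b ∈ B ∧ u ∈ wordsOver B := List.forall_mem_cons

lemma append_mem_wordsOver {u v : List α} :
    u ++ v ∈ wordsOver B ↔ u ∈ wordsOver B ∧ v ∈ wordsOver B := List.forall_mem_append

lemma injective_uncurry_cons : Function.Injective (Function.uncurry (List.cons (α := α))) := by
  rintro ⟨a, u⟩ ⟨b, v⟩ h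
  simpa using h

lemma genSeries_wordsOver (hwt : FiniteFibers (listWeight wt)) :
    genSeries (listWeight wt) (wordsOver B) =
      1 + genSeries wt B * genSeries (listWeight wt) (wordsOver B) := by
  have hsplit : wordsOver B = {[]} ∪ Set.image2 List.cons B (wordsOver B) := by
    ext u
    cases u <;> simp [nil_mem_wordsOver, cons_mem_wordsOver]
  have hdisj : Disjoint {[]} (Set.image2 List.cons B (wordsOver B)) := by simp
  conv_lhs => rw [hsplit, genSeries_union hwt hdisj, genSeries_listWeight_singleton_nil,
    genSeries_image2 hwt.of_listWeight hwt injective_uncurry_cons.injOn listWeight_cons]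

lemma genSeries_wordsOver_length (hwt : FiniteFibers (listWeight wt)) (p : ℕ) :
    genSeries (listWeight wt) {u ∈ wordsOver B | u.length = p} = genSeries wt B ^ p := by
  induction p with
  | zero =>
    have : {u ∈ wordsOver B | u.length = 0} = {[]} := by
      ext u
      simp +contextual [nil_mem_wordsOver]
    rw [this, genSeries_listWeight_singleton_nil, pow_zero]
  | succ p ih =>
    have : {u ∈ wordsOver B | u.length = p + 1} =
        Set.image2 List.cons B {u ∈ wordsOver B | u.length = p} := by
      ext u
      cases u <;> simp [cons_mem_wordsOver, and_assoc]
    rw [this, genSeries_image2 hwt.of_listWeight hwt injective_uncurry_cons.injOn listWeight_cons,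
      ih, pow_succ']

/-- A factorial language: it contains the empty word and every factor of each of its words. -/
structure IsFactorial (Y : Set (List α)) : Prop where
  nil_mem : [] ∈ Y
  of_append : ∀ u v, u ++ v ∈ Y → u ∈ Y ∧ v ∈ Y

lemma IsFactorial.notMem_append_right (hY : IsFactorial Y) {u : List α} (hu : u ∉ Y)
    (v : List α) : u ++ v ∉ Y := fun h => hu (hY.of_append u v h).1

lemma append_mem_cutLang {Ys : List (Set (List α))} (hYs : ∀ Y ∈ Ys, IsFactorial Y)
    {u : List α} (hu : u ∈ cutLang Ys) (v : List α) : v ++ u ∈ cutLang Ys := by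
  cases Ys with
  | nil => exact mem_cutLang_nil _
  | cons Y Ys =>
    obtain ⟨u, huY, w, hw, rfl⟩ := mem_cutLang_cons.1 hu
    exact mem_cutLang_cons.2 ⟨v ++ u, fun h => huY ((hYs Y (by simp)).of_append v u h).2, w, hw,
      List.append_assoc v u w⟩

/-- The shortest words over `B` outside a factorial language `Y`: every word over `B` outside `Y`
has exactly one of them as a prefix. -/
def exitCode (B : Set α) (Y : Set (List α)) : Set (List α) :=
  Set.image2 (fun v b => v ++ [b]) Y B \ Y

lemma exists_exitCode_prefix (hY : IsFactorial Y) {u : List α} (hu : u ∈ wordsOver B)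
    (huY : u ∉ Y) : ∃ m ∈ exitCode B Y, m <+: u := by
  induction u using List.reverseRecOn with
  | nil => exact absurd hY.nil_mem huY
  | append_singleton u b ih =>
    obtain ⟨hu, hb⟩ := append_mem_wordsOver.1 hu
    by_cases huY' : u ∈ Y
    · exact ⟨u ++ [b], ⟨⟨u, huY', b, hb b (by simp), rfl⟩, huY⟩, List.prefix_rfl⟩
    · obtain ⟨m, hm, hmu⟩ := ih hu huY'
      exact ⟨m, hm, hmu.trans (List.prefix_append u [b])⟩

lemma prefix_of_mem_exitCode (hY : IsFactorial Y) {m u v : List α} (hm : m ∈ exitCode B Y)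
    (hmu : m <+: u) (hvu : v <+: u) (hv : v ∉ Y) : m <+: v := by
  obtain ⟨⟨w, hw, b, -, rfl⟩, -⟩ := hm
  rcases List.prefix_or_prefix_of_prefix hmu hvu with h | h
  · exact h
  · rcases List.prefix_concat_iff.1 h with rfl | ⟨x, rfl⟩
    · exact List.prefix_rfl
    · exact absurd (hY.of_append v x hw).1 hv

lemma injOn_append_exitCode (hY : IsFactorial Y) :
    Set.InjOn (Function.uncurry (· ++ ·)) (exitCode B Y ×ˢ K) := by
  rintro ⟨m, u⟩ ⟨hm, -⟩ ⟨m', u'⟩ ⟨hm', -⟩ h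
  change m ++ u = m' ++ u' at h
  have hpre : m <+: m' ++ u' := h ▸ List.prefix_append m u
  have hmm' : m <+: m' := prefix_of_mem_exitCode hY hm hpre (List.prefix_append _ _) hm'.2
  have hm'm : m' <+: m := prefix_of_mem_exitCode hY hm' (List.prefix_append _ _) hpre hm.2
  obtain rfl := hmm'.eq_of_length_le hm'm.length_le
  rw [List.append_cancel_left h]

lemma genSeries_exitCode (hwt : FiniteFibers (listWeight wt)) (hY : IsFactorial Y)
    (hYB : Y ⊆ wordsOver B) :
    genSeries (listWeight wt) (exitCode B Y) =
      genSeries (listWeight wt) Y * genSeries wt B - genSeries (listWeight wt) Y + 1 := by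
  have hnil : {[]} ∪ Y \ {[]} = Y := Set.union_sdiff_cancel (Set.singleton_subset_iff.2 hY.nil_mem)
  have hsnoc : exitCode B Y ∪ Y \ {[]} = Set.image2 (fun v b => v ++ [b]) Y B := by
    refine subset_antisymm (Set.union_subset Set.sdiff_subset ?_) fun u hu => ?_
    · rintro u ⟨huY, hne⟩
      obtain rfl | ⟨v, b, rfl⟩ := u.eq_nil_or_concat'
      · exact absurd rfl hne
      · exact ⟨v, (hY.of_append v [b] huY).1, b, hYB huY b (by simp), rfl⟩
    · by_cases huY : u ∈ Y
      · refine Or.inr ⟨huY, ?_⟩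
        rintro rfl
        simp at hu
      · exact Or.inl ⟨hu, huY⟩
  have hYeq := genSeries_union hwt (s := {[]}) (t := Y \ {[]}) Set.disjoint_sdiff_right
  rw [hnil, genSeries_listWeight_singleton_nil] at hYeq
  have hinj : Function.Injective (Function.uncurry fun (v : List α) b => v ++ [b]) := by
    rintro ⟨v, b⟩ ⟨w, c⟩ h
    simpa using h
  have hsnoc_eq := genSeries_union hwt (s := exitCode B Y) (t := Y \ {[]})
    (Set.disjoint_sdiff_left.mono_right Set.sdiff_subset)
  rw [hsnoc, genSeries_image2 hwt hwt.of_listWeight hinj.injOn (by simp)] at hsnoc_eq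
  linear_combination hYeq - hsnoc_eq

lemma wordsOver_sdiff_concat (hY : IsFactorial Y) (hYB : Y ⊆ wordsOver B)
    (hK : ∀ u ∈ K, ∀ v, v ++ u ∈ K) :
    wordsOver B \ concat Yᶜ K = Y ∪ concat (exitCode B Y) (wordsOver B \ K) := by
  ext u
  constructor
  · rintro ⟨hu, huK⟩
    by_cases huY : u ∈ Y
    · exact Or.inl huY
    · obtain ⟨m, hm, w, rfl⟩ := exists_exitCode_prefix hY hu huY
      exact Or.inr ⟨m, hm, w,
        ⟨(append_mem_wordsOver.1 hu).2, fun hw => huK ⟨m, hm.2, w, hw, rfl⟩⟩, rfl⟩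
  · rintro (huY | ⟨m, hm, w, ⟨hw, hwK⟩, rfl⟩)
    · refine ⟨hYB huY, ?_⟩
      rintro ⟨v, hv, w, -, rfl⟩
      exact hY.notMem_append_right hv w huY
    · obtain ⟨⟨v, hv, b, hb, rfl⟩, -⟩ := id hm
      have hvb : v ++ [b] ∈ wordsOver B :=
        append_mem_wordsOver.2 ⟨hYB hv, cons_mem_wordsOver.2 ⟨hb, nil_mem_wordsOver⟩⟩
      refine ⟨append_mem_wordsOver.2 ⟨hvb, hw⟩, ?_⟩
      rintro ⟨v', hv', w', hw', h⟩
      obtain ⟨x, rfl⟩ := prefix_of_mem_exitCode hY hm (List.prefix_append _ w) ⟨w', h⟩ hv'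
      have hxw : x ++ w' = w := List.append_cancel_left ((List.append_assoc _ x w').symm.trans h)
      exact hwK (hxw ▸ hK w' hw' x)

/-- The generating series of the words over `B` outside `cutLang Ys`, as a function of the series
`t` of `B` and the series `y` of the members of `Ys`: a word outside `concat Yᶜ K` is in `Y`, or it
is a word of `exitCode B Y`, whose series is `y t - y + 1`, followed by a word outside `K`. -/
def cutSeries {R : Type*} [CommRing R] (t : R) (ys : List R) : R :=
  ys.foldr (fun y g => y + (y * t - y + 1) * g) 0

lemma sub_dvd_cutSeries_sub {R : Type*} [CommRing R] (t t' : R) (ys : List R) :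
    t - t' ∣ cutSeries t ys - cutSeries t' ys := by
  induction ys with
  | nil => exact ⟨0, by simp [cutSeries]⟩
  | cons y ys ih =>
    obtain ⟨k, hk⟩ := ih
    refine ⟨y * cutSeries t ys + (y * t' - y + 1) * k, ?_⟩
    change y + (y * t - y + 1) * cutSeries t ys - (y + (y * t' - y + 1) * cutSeries t' ys) = _
    linear_combination (y * t' - y + 1) * hk

theorem genSeries_wordsOver_sdiff_cutLang (hwt : FiniteFibers (listWeight wt))
    {Ys : List (Set (List α))} (hYs : ∀ Y ∈ Ys, IsFactorial Y) (hYsB : ∀ Y ∈ Ys, Y ⊆ wordsOver B) :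
    genSeries (listWeight wt) (wordsOver B \ cutLang Ys) =
      cutSeries (genSeries wt B) (Ys.map (genSeries (listWeight wt))) := by
  induction Ys with
  | nil => simp [cutLang, cutSeries]
  | cons Y Ys ih =>
    rw [List.forall_mem_cons] at hYs hYsB
    have hdisj : Disjoint Y (concat (exitCode B Y) (wordsOver B \ cutLang Ys)) := by
      rw [Set.disjoint_right]
      rintro _ ⟨m, hm, w, -, rfl⟩
      exact hYs.1.notMem_append_right hm.2 w
    calc genSeries (listWeight wt) (wordsOver B \ concat Yᶜ (cutLang Ys))
        = genSeries (listWeight wt) Y + genSeries (listWeight wt) (exitCode B Y) *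
            genSeries (listWeight wt) (wordsOver B \ cutLang Ys) := by
          rw [wordsOver_sdiff_concat hYs.1 hYsB.1 fun u => append_mem_cutLang hYs.2,
            genSeries_union hwt hdisj, concat,
            genSeries_image2 hwt hwt (injOn_append_exitCode hYs.1) listWeight_append]
      _ = _ := by
          rw [genSeries_exitCode hwt hYs.1 hYsB.1, ih hYs.2 hYsB.2]
          rfl

end Languages

/-! ### Series of pattern avoiders -/

section Avoiders

open PowerSeries

variable {S S' : List (List ℕ)} {c c' : List ℕ}

/-- The weight by which connected words are counted. -/
def ConnectedNC.length (t : ConnectedNC) : ℕ := t.1.length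

/-- The contribution `|w| + 1` of a block `w` and of the letter `1` preceding it to the length of
`1[w₁]1⋯1[w_m]1`. -/
def blockWeight (l : List ConnectedNC) : ℕ := (joinWord l).length + 1

lemma listWeight_length (l : List ConnectedNC) :
    listWeight ConnectedNC.length l = (joinWord l).length := (length_joinWord l).symm

lemma listWeight_blockWeight (L : List (List ConnectedNC)) :
    listWeight blockWeight L = (joinWord L.flatten).length + L.length := by
  induction L with
  | nil => rfl
  | cons l L ih =>
    rw [listWeight_cons, ih, List.flatten_cons, ← listWeight_length (l ++ _), listWeight_append,
      listWeight_length, listWeight_length, blockWeight, List.length_cons]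
    ring

lemma length_nestWord (L : List (List ConnectedNC)) :
    (nestWord L).length = listWeight blockWeight L + 1 := by
  change (onePat (L.map joinWord)).length = _
  rw [onePat, length_onePatAux, List.map_map]
  rfl

lemma finiteFibers_listWeight_length : FiniteFibers (listWeight ConnectedNC.length) := fun n =>
  ((finite_setOf_isRGF_length_eq n).preimage joinWord_injective.injOn).subset fun l hl =>
    ⟨isRGF_joinWord l, (listWeight_length l).symm.trans hl⟩

lemma finiteFibers_length : FiniteFibers ConnectedNC.length :=
  finiteFibers_listWeight_length.of_listWeight

lemma finiteFibers_listWeight_blockWeight : FiniteFibers (listWeight blockWeight) := fun n =>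
  ((finiteFibers_length (n + 1)).preimage nestWord_bijective.injective.injOn).subset fun L hL =>
    (length_nestWord L).trans (congrArg (· + 1) hL)

lemma ncard_avoidComponents_fiber {ks : List ℕ} (hks : ks ≠ []) (c : List ℕ) (n : ℕ) :
    {L ∈ avoidComponents c | L.map List.length = ks ∧
      listWeight blockWeight L = n + ks.length}.ncard = ncCount n ks.sum c := by
  rw [ncCount_eq_ncard_components]
  refine Set.BijOn.ncard_eq (f := List.flatten) ⟨?_, ?_, ?_⟩
  · rintro L ⟨hL, rfl, hn⟩
    rw [listWeight_blockWeight, List.length_map, Nat.add_right_cancel_iff] at hn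
    exact ⟨hL.resolve_left (by simpa using hks), List.length_flatten, hn⟩
  · rintro L ⟨-, hL, -⟩ L' ⟨-, hL', -⟩ h
    exact List.eq_iff_flatten_eq.2 ⟨h, hL.trans hL'.symm⟩
  · rintro l ⟨hl, hsum, hn⟩
    have hflat := List.flatten_splitLengths l ks hsum.le
    have hlen := List.map_splitLengths_length l ks hsum.ge
    refine ⟨ks.splitLengths l, ⟨Or.inr (hflat.symm ▸ hl), hlen, ?_⟩, hflat⟩
    rw [listWeight_blockWeight, hflat, hn, ← List.length_map List.length, hlen]

/-- The series of `avoidComponents c` depends on `c` only through the numbers `ncCount n p c`,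
because a sequence of words is its join together with the numbers of components of its terms. -/
lemma genSeries_avoidComponents_congr (h : ccEquiv c c') :
    genSeries (listWeight blockWeight) (avoidComponents c) =
      genSeries (listWeight blockWeight) (avoidComponents c') := by
  refine genSeries_eq_of_fiberwise finiteFibers_listWeight_blockWeight
    finiteFibers_listWeight_blockWeight (List.map List.length) (List.map List.length) fun ks n => ?_
  rcases eq_or_ne ks [] with rfl | hks
  · congr 1
    ext L
    simp +contextual [avoidComponents]
  by_cases hn : ks.length ≤ n
  · obtain ⟨n, rfl⟩ := Nat.exists_eq_add_of_le' hn
    rw [ncard_avoidComponents_fiber hks, ncard_avoidComponents_fiber hks, h]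
  · have hempty : ∀ c, {L ∈ avoidComponents c | L.map List.length = ks ∧
        listWeight blockWeight L = n} = ∅ := by
      refine fun c => Set.eq_empty_of_forall_notMem ?_
      rintro L ⟨-, rfl, rfl⟩
      rw [List.length_map, listWeight_blockWeight] at hn
      omega
    rw [hempty, hempty]

lemma isFactorial_avoidComponents (c : List ℕ) : IsFactorial (avoidComponents c) where
  nil_mem := Or.inl rfl
  of_append L M h := by
    rcases h with h | h
    · obtain ⟨rfl, rfl⟩ := List.append_eq_nil_iff.1 h
      exact ⟨Or.inl rfl, Or.inl rfl⟩
    · rw [joinWord_flatten, List.map_append, rgfJoin_append, ← joinWord_flatten,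
        ← joinWord_flatten] at h
      exact ⟨Or.inr (h.mono (List.sublist_append_left _ _)), Or.inr fun hM =>
        h.mono (List.sublist_append_right _ _) ((patContains_map_iff add_left_strictMono).2 hM)⟩

/-- The connected non-crossing words avoiding `σ`. -/
def connectedAvoiders (σ : List ℕ) : Set ConnectedNC := {t | PatAvoids t.1 σ}

lemma mem_wordsOver_connectedAvoiders_onePat {l : List ConnectedNC} :
    l ∈ wordsOver (connectedAvoiders (onePat S)) ↔ PatAvoids (joinWord l) (onePat S) :=
  patAvoids_joinWord_onePat_iff.symm

lemma avoidComponents_subset_wordsOver (hc : c ∈ S) :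
    avoidComponents c ⊆ wordsOver (wordsOver (connectedAvoiders (onePat S))) := by
  rintro L (rfl | hL) l hl
  · simp at hl
  · rw [mem_wordsOver_connectedAvoiders_onePat]
    rw [joinWord_flatten] at hL
    obtain ⟨s, hs⟩ := exists_map_add_sublist_rgfJoin (List.mem_map_of_mem (f := joinWord) hl)
    exact fun h => hL (((patContains_map_iff add_left_strictMono).2 (h.of_mem_onePat hc)).mono hs)

lemma connectedAvoiders_onePat (hS : ∀ c ∈ S, IsPositive c) :
    connectedAvoiders (onePat S) = nestWord ''
      (wordsOver (wordsOver (connectedAvoiders (onePat S))) \ cutLang (S.map avoidComponents)) := by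
  ext t
  obtain ⟨L, rfl⟩ := nestWord_bijective.surjective t
  rw [nestWord_bijective.injective.mem_set_image]
  refine (patAvoids_nestWord_onePat_iff hS).trans (and_congr_left fun _ => ?_)
  exact forall₂_congr fun l _ => mem_wordsOver_connectedAvoiders_onePat.symm

lemma genSeries_connectedAvoiders_onePat (hS : ∀ c ∈ S, IsPositive c) :
    genSeries ConnectedNC.length (connectedAvoiders (onePat S)) =
      X * cutSeries (X * genSeries (listWeight ConnectedNC.length)
          (wordsOver (connectedAvoiders (onePat S))))
        (S.map fun c => genSeries (listWeight blockWeight) (avoidComponents c)) := by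
  set B := wordsOver (connectedAvoiders (onePat S))
  have hletters : genSeries blockWeight B = X * genSeries (listWeight ConnectedNC.length) B := by
    rw [← pow_one X, ← genSeries_image (f := id) (wt' := blockWeight) (Set.injOn_id B)
      fun l _ => ?_, Set.image_id]
    rw [listWeight_length]
    rfl
  conv_lhs => rw [connectedAvoiders_onePat hS, genSeries_image (k := 1)
    nestWord_bijective.injective.injOn fun L _ => length_nestWord L]
  rw [genSeries_wordsOver_sdiff_cutLang finiteFibers_listWeight_blockWeight
      (by simpa using fun c _ => isFactorial_avoidComponents c)
      (by simpa using fun c hc => avoidComponents_subset_wordsOver hc),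
    pow_one, hletters, List.map_map]
  rfl

lemma ncCount_onePat (n p : ℕ) (S : List (List ℕ)) : (ncCount n p (onePat S) : ℤ) =
    coeff n (genSeries ConnectedNC.length (connectedAvoiders (onePat S)) ^ p) := by
  rw [← genSeries_wordsOver_length finiteFibers_listWeight_length, coeff_genSeries,
    ncCount_eq_ncard_components]
  congr 2
  ext l
  simp only [Set.mem_ofPred_eq, mem_wordsOver_connectedAvoiders_onePat, listWeight_length,
    and_assoc]

/-- The system `A = 1 + D A`, `D = X · cutSeries (X A) gs` determines `D`: the difference of two
solutions `A` is a multiple of itself by a series without constant term. -/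
lemma eq_of_eq_X_mul_cutSeries {A A' D D' : ℤ⟦X⟧} {gs : List ℤ⟦X⟧} (hA : A = 1 + D * A)
    (hA' : A' = 1 + D' * A') (hD : D = X * cutSeries (X * A) gs)
    (hD' : D' = X * cutSeries (X * A') gs) : D = D' := by
  obtain ⟨k, hk⟩ := sub_dvd_cutSeries_sub (X * A) (X * A') gs
  have hprod : (A - A') * (1 - X * (cutSeries (X * A) gs + X * k * A')) = 0 := by
    linear_combination hA - hA' + A * hD - A' * hD' + X * A' * hk
  have hne : 1 - X * (cutSeries (X * A) gs + X * k * A') ≠ 0 := fun h => by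
    simpa using congrArg constantCoeff h
  have hAA' : A = A' := sub_eq_zero.1 ((mul_eq_zero.1 hprod).resolve_right hne)
  rw [hD, hD', hAA']

instance : Std.Refl ccEquiv := ⟨fun _ _ _ => rfl⟩

theorem stmt10_general (hS : ∀ c ∈ S, IsPositive c) (hS' : ∀ c ∈ S', IsPositive c)
    (h : List.Forall₂ ccEquiv S S') : ccEquiv (onePat S) (onePat S') := by
  have hgs : (S.map fun c => genSeries (listWeight blockWeight) (avoidComponents c)) =
      S'.map fun c => genSeries (listWeight blockWeight) (avoidComponents c) := by
    rw [← List.forall₂_eq_eq_eq, List.forall₂_map_left_iff, List.forall₂_map_right_iff]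
    exact h.imp fun _ _ => genSeries_avoidComponents_congr
  have hseries : genSeries ConnectedNC.length (connectedAvoiders (onePat S)) =
      genSeries ConnectedNC.length (connectedAvoiders (onePat S')) :=
    eq_of_eq_X_mul_cutSeries (genSeries_wordsOver finiteFibers_listWeight_length)
      (genSeries_wordsOver finiteFibers_listWeight_length)
      (genSeries_connectedAvoiders_onePat hS) (hgs ▸ genSeries_connectedAvoiders_onePat hS')
  intro n p
  exact_mod_cast (ncCount_onePat n p S).trans (hseries ▸ (ncCount_onePat n p S').symm)

end Avoiders

/-- Theorem 3.6: in `1[σ₁]1⋯1[σ_k]1`, replacing a non-final factor `σ_q` by a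
cc-equivalent pattern yields a cc-equivalent pattern. -/
theorem stmt10 (pre post : List (List ℕ)) (a a' : List ℕ)
    (hall : ∀ c ∈ pre ++ [a] ++ post, IsRGF c ∧ NonCrossing c)
    (ha' : IsRGF a') (ha'nc : NonCrossing a')
    (hpost : post ≠ [])
    (h : ccEquiv a a') :
    ccEquiv (onePat (pre ++ [a] ++ post)) (onePat (pre ++ [a'] ++ post)) := by
  have hS : ∀ c ∈ pre ++ [a] ++ post, IsPositive c := fun c hc => (hall c hc).1.1
  have hS' : ∀ c ∈ pre ++ [a'] ++ post, IsPositive c := by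
    simp only [List.forall_mem_append, List.forall_mem_singleton] at hS ⊢
    exact ⟨⟨hS.1.1, ha'.1⟩, hS.2⟩
  exact stmt10_general hS hS' (List.rel_append
    (List.rel_append (List.forall₂_refl pre) (.cons h .nil)) (List.forall₂_refl post))
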